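/- arXiv:2404.12568 — 4 statements merged into one kernel-verified Lean document; each statement's English description precedes it below -/
import Mathlib

section
/- Assume (σ_min + σ_min,2)/2 < τ < (σ_max + σ_max,2)/2, τ ≠ σᵢ for all 1 ≤ i ≤ N, and δ < d₂ where d₂ = min_{2≤i≤N} |σᵢ − τ|, and let r ∈ ℝ^{M+N} satisfy Π̃ r = r. Then for every j ∈ ℕ there exists w ∈ K_j(B̃₁, r) such that ‖B̃₁ w + r‖ ≤ 2 · (1 − 2/(1 + (σ_max + τ + δ)/(d₂ − δ)))^{⌊j/2⌋} · ‖r‖, where ⌊·⌋ denotes the integer part. -/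
open Matrix

noncomputable def vnorm {ι : Type*} [Fintype ι] (x : ι → ℝ) : ℝ :=
  Real.sqrt (∑ i, x i ^ 2)

noncomputable def specNorm {ι κ : Type*} [Fintype ι] [Fintype κ] [DecidableEq κ]
    (A : Matrix ι κ ℝ) : ℝ :=
  ‖LinearMap.toContinuousLinearMap (Matrix.toEuclideanLin A)‖

noncomputable def Krylov {ι : Type*} [Fintype ι] [DecidableEq ι]
    (B : Matrix ι ι ℝ) (r : ι → ℝ) (j : ℕ) : Submodule ℝ (ι → ℝ) :=
  Submodule.span ℝ {x | ∃ i < j, x = (B ^ i) *ᵥ r}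

section polys
open Polynomial

lemma cheb_lower (z : ℝ) (hz : 0 < z) (k : ℕ) :
    z ^ k / 2 ≤ (Chebyshev.T ℝ (k : ℤ)).eval ((z + z⁻¹) / 2) := by
  rw [← Real.cosh_log hz, Chebyshev.T_real_cosh]
  rw [Real.cosh_eq]
  have h1 : Real.exp (((k : ℤ) : ℝ) * Real.log z) = z ^ k := by
    rw [Int.cast_natCast, Real.exp_nat_mul, Real.exp_log hz]
  rw [h1]
  have := Real.exp_pos (-(((k : ℤ) : ℝ) * Real.log z))
  linarith

lemma res_poly (a b : ℝ) (ha : 0 < a) (hab : a < b) (k : ℕ) :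
    ∃ q : ℝ[X], q.natDegree ≤ 2 * k ∧ q.coeff 0 = 1 ∧
      ∀ x : ℝ, a ≤ |x| → |x| ≤ b → |q.eval x| ≤ 2 * (1 - 2 / (1 + b / a)) ^ k := by
  have hD : 0 < b ^ 2 - a ^ 2 := by nlinarith
  set z : ℝ := (b + a) / (b - a) with hz
  have hba : 0 < b - a := by linarith
  have hb : 0 < b := by linarith
  have hzpos : 0 < z := by positivity
  set c : ℝ := (b ^ 2 + a ^ 2) / (b ^ 2 - a ^ 2) with hc
  have hcz : c = (z + z⁻¹) / 2 := by
    have : b ^ 2 - a ^ 2 ≠ 0 := hD.ne'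
    have h3 : b - a ≠ 0 := hba.ne'
    have h4 : b + a ≠ 0 := by positivity
    rw [hc, hz, inv_div]
    rw [show b ^ 2 - a ^ 2 = (b - a) * (b + a) by ring]
    field_simp
    ring
  have hL := cheb_lower z hzpos k
  rw [← hcz] at hL
  set L : ℝ := (Chebyshev.T ℝ (k : ℤ)).eval c with hLdef
  have hzk : 0 < z ^ k := by positivity
  have hLpos : 0 < L := by linarith
  set lin : ℝ[X] := C c - C (2 / (b ^ 2 - a ^ 2)) * X ^ 2 with hlin
  refine ⟨C L⁻¹ * (Chebyshev.T ℝ (k : ℤ)).comp lin, ?_, ?_, ?_⟩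
  · refine (natDegree_C_mul_le _ _).trans ?_
    refine natDegree_comp_le.trans ?_
    have h1 : (Chebyshev.T ℝ (k : ℤ)).natDegree = k := by
      simp [Chebyshev.natDegree_T]
    have h2 : lin.natDegree ≤ 2 := by
      rw [hlin]; compute_degree
    rw [h1, mul_comm]
    exact Nat.mul_le_mul_right _ h2
  · rw [coeff_zero_eq_eval_zero, eval_mul, eval_comp, eval_C]
    have : lin.eval 0 = c := by simp [hlin]
    rw [this, ← hLdef]
    exact inv_mul_cancel₀ hLpos.ne'
  · intro x hx1 hx2
    rw [eval_mul, eval_comp, eval_C, abs_mul, abs_of_pos (inv_pos.mpr hLpos)]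
    have hev : lin.eval x = (b ^ 2 + a ^ 2 - 2 * x ^ 2) / (b ^ 2 - a ^ 2) := by
      simp only [hlin, eval_sub, eval_mul, eval_C, eval_pow, eval_X, hc]
      ring
    have hxa : a ^ 2 ≤ x ^ 2 := by rw [← sq_abs x]; exact pow_le_pow_left₀ ha.le hx1 2
    have hxb : x ^ 2 ≤ b ^ 2 := by rw [← sq_abs x]; exact pow_le_pow_left₀ (abs_nonneg _) hx2 2
    have hle : |lin.eval x| ≤ 1 := by
      rw [hev, abs_div, abs_of_pos hD, div_le_one hD, abs_le]
      constructor <;> linarith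
    have hT := Chebyshev.abs_eval_T_real_le_one (k : ℤ) hle
    have hbase : (1 - 2 / (1 + b / a)) = z⁻¹ := by
      rw [hz, inv_div]
      have h4 : b + a ≠ 0 := by positivity
      have h5 : a + b ≠ 0 := by positivity
      have : 1 + b / a = (a + b) / a := by field_simp
      rw [this]
      field_simp
      ring
    rw [hbase, inv_pow]
    calc L⁻¹ * |(Chebyshev.T ℝ (k : ℤ)).eval (lin.eval x)| ≤ L⁻¹ * 1 := by gcongr
      _ ≤ (z ^ k / 2)⁻¹ * 1 := by gcongr
      _ = _ := by rw [inv_div]; ring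

lemma dot_aeval {ι : Type*} [Fintype ι] [DecidableEq ι] (K : Matrix ι ι ℝ) (hK : Kᵀ = K)
    (v r : ι → ℝ) (l : ℝ) (hv : K *ᵥ v = l • v) (p : ℝ[X]) :
    v ⬝ᵥ (aeval K p *ᵥ r) = p.eval l * (v ⬝ᵥ r) := by
  have hpow : ∀ n : ℕ, v ⬝ᵥ ((K ^ n) *ᵥ r) = l ^ n * (v ⬝ᵥ r) := by
    intro n
    induction n with
    | zero => simp
    | succ n ih =>
      rw [pow_succ', ← mulVec_mulVec, dotProduct_mulVec, ← mulVec_transpose, hK, hv,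
        smul_dotProduct, ih, smul_eq_mul]
      ring
  rw [aeval_eq_sum_range, sum_mulVec, dotProduct_sum, eval_eq_sum_range, Finset.sum_mul]
  refine Finset.sum_congr rfl fun n _ => ?_
  rw [smul_mulVec, dotProduct_smul, hpow, smul_eq_mul]
  ring

lemma vnorm_eq {ι : Type*} [Fintype ι] (x : ι → ℝ) : vnorm x = ‖WithLp.toLp 2 x‖ := by
  rw [EuclideanSpace.norm_eq]
  simp [vnorm]

lemma minres_abs {ι : Type*} [Fintype ι] [DecidableEq ι] (K : Matrix ι ι ℝ) (hK : Kᵀ = K)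
    (r : ι → ℝ) (a b : ℝ) (ha : 0 < a) (hab : a < b)
    (h : ∀ (v : ι → ℝ) (l : ℝ), v ≠ 0 → K *ᵥ v = l • v → v ⬝ᵥ r ≠ 0 → a ≤ |l| ∧ |l| ≤ b) (j : ℕ) :
    ∃ w ∈ Krylov K r j,
      vnorm (K *ᵥ w + r) ≤ 2 * (1 - 2 / (1 + b / a)) ^ (j / 2) * vnorm r := by
  obtain ⟨q, hq1, hq2, hq3⟩ := res_poly a b ha hab (j / 2)
  refine ⟨aeval K q.divX *ᵥ r, ?_, ?_⟩
  · rw [aeval_eq_sum_range, sum_mulVec]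
    refine Submodule.sum_mem _ fun i hi => ?_
    rw [smul_mulVec]
    by_cases hij : i < j
    · exact Submodule.smul_mem _ _ (Submodule.subset_span ⟨i, hij, rfl⟩)
    · rw [coeff_divX, coeff_eq_zero_of_natDegree_lt (by omega), zero_smul]
      exact Submodule.zero_mem _
  · have e1 : K *ᵥ (aeval K q.divX *ᵥ r) + r = aeval K q *ᵥ r := by
      conv_rhs => rw [← X_mul_divX_add q, hq2]
      simp [add_mulVec]
    rw [e1]
    have hH : K.IsHermitian := by
      rw [IsHermitian, conjTranspose_eq_transpose_of_trivial, hK]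
    set e := hH.eigenvectorBasis with he
    have hinner : ∀ i (x : ι → ℝ), inner ℝ (e i) (WithLp.toLp 2 x) = (e i).ofLp ⬝ᵥ x := by
      intro i x
      rw [EuclideanSpace.inner_eq_star_dotProduct, dotProduct_comm]
      simp
    have hc0 : 0 ≤ 2 * (1 - 2 / (1 + b / a)) ^ (j / 2) :=
      (abs_nonneg _).trans (hq3 a (by rw [abs_of_pos ha]) (by rw [abs_of_pos ha]; exact hab.le))
    rw [vnorm_eq, vnorm_eq]
    refine le_of_sq_le_sq ?_ (by positivity)
    rw [mul_pow, ← e.sum_sq_norm_inner_right, ← e.sum_sq_norm_inner_right, Finset.mul_sum]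
    refine Finset.sum_le_sum fun i _ => ?_
    rw [hinner, hinner, dot_aeval K hK _ r _ (hH.mulVec_eigenvectorBasis i), norm_mul, mul_pow]
    by_cases h0 : (e i).ofLp ⬝ᵥ r = 0
    · rw [h0]; simp
    · gcongr
      have hne : (e i).ofLp ≠ 0 := by
        intro h; rw [h] at h0; simp at h0
      obtain ⟨h1, h2⟩ := h _ _ hne (hH.mulVec_eigenvectorBasis i) h0
      exact hq3 _ h1 h2
end polys

lemma vnorm_nonneg' {ι : Type*} [Fintype ι] (x : ι → ℝ) : 0 ≤ vnorm x := Real.sqrt_nonneg _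

lemma vnorm_sq' {ι : Type*} [Fintype ι] (x : ι → ℝ) : vnorm x ^ 2 = x ⬝ᵥ x := by
  rw [vnorm, Real.sq_sqrt (Finset.sum_nonneg fun i _ => sq_nonneg _)]
  simp [dotProduct, sq]

lemma dot_le_vnorm {ι : Type*} [Fintype ι] (x y : ι → ℝ) : |x ⬝ᵥ y| ≤ vnorm x * vnorm y := by
  have h := abs_real_inner_le_norm (WithLp.toLp 2 x) (WithLp.toLp 2 y)
  rw [EuclideanSpace.inner_eq_star_dotProduct, ← vnorm_eq, ← vnorm_eq, dotProduct_comm] at h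
  simpa using h

lemma specNorm_nonneg' {ι κ : Type*} [Fintype ι] [Fintype κ] [DecidableEq κ]
    (A : Matrix ι κ ℝ) : 0 ≤ specNorm A := norm_nonneg _

lemma bil_le {ι κ : Type*} [Fintype ι] [Fintype κ] [DecidableEq κ]
    (A : Matrix ι κ ℝ) (x : ι → ℝ) (y : κ → ℝ) :
    |x ⬝ᵥ A *ᵥ y| ≤ specNorm A * vnorm x * vnorm y := by
  have h1 : vnorm (A *ᵥ y) ≤ specNorm A * vnorm y := by
    rw [vnorm_eq, vnorm_eq]
    exact (LinearMap.toContinuousLinearMap (Matrix.toEuclideanLin A)).le_opNorm (WithLp.toLp 2 y)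
  calc _ ≤ vnorm x * vnorm (A *ᵥ y) := dot_le_vnorm _ _
    _ ≤ vnorm x * (specNorm A * vnorm y) := by gcongr; exact vnorm_nonneg' x
    _ = _ := by ring

lemma householder_pos {n : Type*} [Fintype n] [DecidableEq n] (u t : n → ℝ)
    (hu : u ⬝ᵥ u = 1) (ht : t ⬝ᵥ t = 1) (hc : 0 ≤ u ⬝ᵥ t) :
    ∃ (H : Matrix n n ℝ) (g : n → ℝ) (k : ℝ), Hᵀ = H ∧ H * H = 1 ∧
      H * (1 - vecMulVec u u) * H = 1 - vecMulVec t t ∧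
      u ⬝ᵥ g = 0 ∧ vnorm g = Real.sqrt (1 - (u ⬝ᵥ t) ^ 2) ∧ 0 ≤ k ∧ k ≤ 1 ∧
      ∀ x, u ⬝ᵥ x = 0 → H *ᵥ x = x - (g ⬝ᵥ x) • (u + k • g) := by
  set c := u ⬝ᵥ t with hcdef
  have h1c : (1 + c) ≠ 0 := by positivity
  have htu : t ⬝ᵥ u = c := by rw [dotProduct_comm]
  set w := t + u with hw
  have hww : w ⬝ᵥ w = 2 * (1 + c) := by
    simp only [hw, add_dotProduct, dotProduct_add, hu, ht, htu, ← hcdef]; ring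
  have hwu : w ⬝ᵥ u = 1 + c := by
    simp only [hw, add_dotProduct, hu, htu]; ring
  set H : Matrix n n ℝ := 1 - (1 + c)⁻¹ • vecMulVec w w with hH
  have hHT : Hᵀ = H := by
    simp [hH, transpose_vecMulVec]
  have hHv : ∀ x, H *ᵥ x = x - ((1 + c)⁻¹ * (w ⬝ᵥ x)) • w := by
    intro x
    rw [hH, sub_mulVec, one_mulVec, smul_mulVec, vecMulVec_mulVec, op_smul_eq_smul, smul_smul]
  have hHH : H * H = 1 := by
    apply Matrix.ext_of_mulVec_single
    intro i
    rw [← mulVec_mulVec, hHv, hHv, dotProduct_sub, dotProduct_smul, hww, one_mulVec]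
    rw [sub_sub, ← add_smul]
    have : ∀ s : ℝ, (1 + c)⁻¹ * s + (1 + c)⁻¹ * (s - ((1 + c)⁻¹ * s) • (2 * (1 + c))) = 0 := by
      intro s
      rw [smul_eq_mul]
      field_simp
      ring
    rw [this, zero_smul, sub_zero]
  have hHu : H *ᵥ u = -t := by
    rw [hHv, hwu, inv_mul_cancel₀ h1c, one_smul, hw]
    abel
  clear_value H
  refine ⟨H, t - c • u, (1 + c)⁻¹, hHT, hHH, ?_, ?_, ?_, by positivity, ?_, ?_⟩
  · rw [mul_sub, sub_mul, mul_one, hHH, mul_vecMulVec, vecMulVec_mul, hHu, ← mulVec_transpose,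
      hHT, hHu, neg_vecMulVec, vecMulVec_neg, neg_neg]
  · rw [dotProduct_sub, dotProduct_smul, hu, ← hcdef]; simp
  · rw [vnorm]
    congr 1
    have : ∑ i, (t - c • u) i ^ 2 = (t - c • u) ⬝ᵥ (t - c • u) := by simp [dotProduct, sq]
    rw [this]
    simp only [sub_dotProduct, dotProduct_sub, smul_dotProduct, dotProduct_smul, hu, ht, htu,
      ← hcdef, smul_eq_mul]
    ring
  · exact inv_le_one_of_one_le₀ (by linarith)
  · intro x hx
    rw [hHv]
    have e1 : w ⬝ᵥ x = t ⬝ᵥ x := by rw [hw, add_dotProduct, hx, add_zero]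
    have e2 : (t - c • u) ⬝ᵥ x = t ⬝ᵥ x := by
      rw [sub_dotProduct, smul_dotProduct, hx]; simp
    rw [e1, e2]
    congr 1
    rw [mul_comm, ← smul_smul]
    congr 1
    ext i
    simp only [hw, Pi.smul_apply, Pi.add_apply, Pi.sub_apply, smul_eq_mul]
    field_simp
    ring

lemma householder {n : Type*} [Fintype n] [DecidableEq n] (u t : n → ℝ)
    (hu : u ⬝ᵥ u = 1) (ht : t ⬝ᵥ t = 1) :
    ∃ (H : Matrix n n ℝ) (g : n → ℝ) (k : ℝ), Hᵀ = H ∧ H * H = 1 ∧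
      H * (1 - vecMulVec u u) * H = 1 - vecMulVec t t ∧
      u ⬝ᵥ g = 0 ∧ vnorm g = Real.sqrt (1 - (u ⬝ᵥ t) ^ 2) ∧ 0 ≤ k ∧ k ≤ 1 ∧
      ∀ x, u ⬝ᵥ x = 0 → H *ᵥ x = x - (g ⬝ᵥ x) • (u + k • g) := by
  rcases le_total 0 (u ⬝ᵥ t) with h | h
  · exact householder_pos u t hu ht h
  · have := householder_pos u (-t) hu (by simpa using ht) (by simpa using h)
    simpa [neg_vecMulVec, vecMulVec_neg] using this

lemma perturb {m n : Type*} [Fintype m] [Fintype n] [DecidableEq m] [DecidableEq n]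
    (A : Matrix m n ℝ) (u : m → ℝ) (v : n → ℝ) (hu : u ⬝ᵥ u = 1) (hv : v ⬝ᵥ v = 1)
    (s1 : ℝ) (hAv : A *ᵥ v = s1 • u) (hAu : Aᵀ *ᵥ u = s1 • v)
    (g : m → ℝ) (h : n → ℝ) (k l s s' : ℝ) (hk0 : 0 ≤ k) (hk1 : k ≤ 1) (hl0 : 0 ≤ l) (hl1 : l ≤ 1)
    (hug : u ⬝ᵥ g = 0) (hvh : v ⬝ᵥ h = 0) (hg : vnorm g = s) (hh : vnorm h = s')
    (hs1 : s ≤ 1) (hs1' : s' ≤ 1)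
    (x : m → ℝ) (y : n → ℝ) (hx : u ⬝ᵥ x = 0) (hy : v ⬝ᵥ y = 0) :
    |(x - (g ⬝ᵥ x) • (u + k • g)) ⬝ᵥ A *ᵥ (y - (h ⬝ᵥ y) • (v + l • h)) - x ⬝ᵥ A *ᵥ y|
      ≤ specNorm A * (s + s') ^ 2 * (vnorm x * vnorm y) := by
  have huA : ∀ z, u ⬝ᵥ A *ᵥ z = s1 * (v ⬝ᵥ z) := by
    intro z
    rw [dotProduct_mulVec, ← mulVec_transpose, hAu, smul_dotProduct, smul_eq_mul]
  set α := g ⬝ᵥ x with hα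
  set β := h ⬝ᵥ y with hβ
  have hxu : x ⬝ᵥ u = 0 := by rw [dotProduct_comm, hx]
  have hgu : g ⬝ᵥ u = 0 := by rw [dotProduct_comm, hug]
  have key : (x - α • (u + k • g)) ⬝ᵥ A *ᵥ (y - β • (v + l • h)) - x ⬝ᵥ A *ᵥ y
      = -(β * l) * (x ⬝ᵥ A *ᵥ h) - (α * k) * (g ⬝ᵥ A *ᵥ y) + α * β * (u ⬝ᵥ A *ᵥ v)
        + α * β * (k * l) * (g ⬝ᵥ A *ᵥ h) := by
    simp only [mulVec_sub, mulVec_add, mulVec_smul, sub_dotProduct, add_dotProduct, dotProduct_sub,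
      dotProduct_add, smul_dotProduct, dotProduct_smul, huA, hAv, hxu, hgu, hy, hvh, hu,
      smul_eq_mul]
    ring
  rw [key]
  have hA0 := specNorm_nonneg' A
  set a := specNorm A with ha
  have hX := vnorm_nonneg' x
  have hY := vnorm_nonneg' y
  have hs0 : 0 ≤ s := hg ▸ vnorm_nonneg' g
  have hs0' : 0 ≤ s' := hh ▸ vnorm_nonneg' h
  have bα : |α| ≤ s * vnorm x := by rw [← hg]; exact dot_le_vnorm _ _
  have bβ : |β| ≤ s' * vnorm y := by rw [← hh]; exact dot_le_vnorm _ _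
  have b1 := bil_le A x h
  have b2 := bil_le A g y
  have b3 := bil_le A u v
  have b4 := bil_le A g h
  have nu : vnorm u = 1 := by
    have := vnorm_sq' u
    rw [hu] at this
    exact (pow_eq_one_iff_of_nonneg (vnorm_nonneg' u) two_ne_zero).mp this
  have nv : vnorm v = 1 := by
    have := vnorm_sq' v
    rw [hv] at this
    exact (pow_eq_one_iff_of_nonneg (vnorm_nonneg' v) two_ne_zero).mp this
  rw [hh, ← ha] at b1
  rw [hg, ← ha] at b2
  rw [nu, nv, ← ha] at b3
  rw [hg, hh, ← ha] at b4
  set X := vnorm x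
  set Y := vnorm y
  have c1 : |-(β * l) * (x ⬝ᵥ A *ᵥ h)| ≤ (s' * Y * 1) * (a * X * s') := by
    rw [abs_mul, abs_neg, abs_mul, abs_of_nonneg hl0]
    gcongr
  have c2 : |(α * k) * (g ⬝ᵥ A *ᵥ y)| ≤ (s * X * 1) * (a * s * Y) := by
    rw [abs_mul, abs_mul, abs_of_nonneg hk0]
    gcongr
  have c3 : |α * β * (u ⬝ᵥ A *ᵥ v)| ≤ (s * X) * (s' * Y) * (a * 1 * 1) := by
    rw [abs_mul, abs_mul]
    gcongr
  have c4 : |α * β * (k * l) * (g ⬝ᵥ A *ᵥ h)| ≤ (s * X) * (s' * Y) * (1 * 1) * (a * 1 * 1) := by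
    rw [abs_mul, abs_mul, abs_mul, abs_of_nonneg (mul_nonneg hk0 hl0)]
    gcongr
    exact b4.trans (by gcongr)
  calc _ ≤ |-(β * l) * (x ⬝ᵥ A *ᵥ h)| + |(α * k) * (g ⬝ᵥ A *ᵥ y)| + |α * β * (u ⬝ᵥ A *ᵥ v)|
        + |α * β * (k * l) * (g ⬝ᵥ A *ᵥ h)| := by
        refine (abs_add_le _ _).trans ?_
        gcongr
        refine (abs_add_le _ _).trans ?_
        gcongr
        exact abs_sub _ _
    _ ≤ (s' * Y * 1) * (a * X * s') + (s * X * 1) * (a * s * Y) + (s * X) * (s' * Y) * (a * 1 * 1)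
        + (s * X) * (s' * Y) * (1 * 1) * (a * 1 * 1) := by linarith
    _ = _ := by ring

lemma diag_eq {N K : ℕ} (σ : Fin N → ℝ) (S : Matrix (Fin (N + K)) (Fin N) ℝ)
    (hS : ∀ i j, S i j = if (i : ℕ) = (j : ℕ) then σ j else 0) (τ : ℝ)
    (x : Fin (N + K) → ℝ) (y : Fin N → ℝ) :
    ((-τ) • x + S *ᵥ y) ⬝ᵥ ((-τ) • x + S *ᵥ y) + (Sᵀ *ᵥ x + (-τ) • y) ⬝ᵥ (Sᵀ *ᵥ x + (-τ) • y)
      = ∑ i : Fin N, ((σ i * y i - τ * x (Fin.castAdd K i)) ^ 2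
          + (σ i * x (Fin.castAdd K i) - τ * y i) ^ 2)
        + ∑ i : Fin K, (τ * x (Fin.natAdd N i)) ^ 2 := by
  have h1 : ∀ i : Fin N, (S *ᵥ y) (Fin.castAdd K i) = σ i * y i := by
    intro i
    rw [mulVec, dotProduct, Finset.sum_eq_single i]
    · simp [hS]
    · intro j _ hj
      rw [hS, if_neg, zero_mul]
      intro h; apply hj; ext; simpa using h.symm
    · simp
  have h2 : ∀ i : Fin K, (S *ᵥ y) (Fin.natAdd N i) = 0 := by
    intro i
    rw [mulVec, dotProduct]
    refine Finset.sum_eq_zero fun j _ => ?_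
    rw [hS, if_neg, zero_mul]
    have := j.2
    simp
    omega
  have h3 : ∀ i : Fin N, (Sᵀ *ᵥ x) i = σ i * x (Fin.castAdd K i) := by
    intro i
    rw [mulVec, dotProduct, Finset.sum_eq_single (Fin.castAdd K i)]
    · simp [hS]
    · intro j _ hj
      rw [transpose_apply, hS, if_neg, zero_mul]
      intro h; apply hj; ext; simpa using h
    · simp
  simp only [dotProduct, Fin.sum_univ_add, Pi.add_apply, Pi.smul_apply, h1, h2, h3, smul_eq_mul]
  rw [Finset.sum_add_distrib]
  have e1 : ∀ i, (-τ * x (Fin.castAdd K i) + σ i * y i) * (-τ * x (Fin.castAdd K i) + σ i * y i)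
    = (σ i * y i - τ * x (Fin.castAdd K i)) ^ 2 := fun i => by ring
  have e2 : ∀ i, (σ i * x (Fin.castAdd K i) + -τ * y i) * (σ i * x (Fin.castAdd K i) + -τ * y i)
    = (σ i * x (Fin.castAdd K i) - τ * y i) ^ 2 := fun i => by ring
  have e3 : ∀ i, (-τ * x (Fin.natAdd N i) + 0) * (-τ * x (Fin.natAdd N i) + 0)
    = (τ * x (Fin.natAdd N i)) ^ 2 := fun i => by ring
  simp only [e1, e2, e3]
  ring

lemma norm_eq' {N K : ℕ} (x : Fin (N + K) → ℝ) (y : Fin N → ℝ) :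
    x ⬝ᵥ x + y ⬝ᵥ y = ∑ i : Fin N, (x (Fin.castAdd K i) ^ 2 + y i ^ 2)
      + ∑ i : Fin K, x (Fin.natAdd N i) ^ 2 := by
  simp only [dotProduct, Fin.sum_univ_add, Finset.sum_add_distrib, sq]
  ring

lemma diag_bounds {M N : ℕ} (hN : 0 < N) (hMN : N ≤ M) (σ : Fin N → ℝ) (hσ : ∀ i, 0 ≤ σ i)
    (S : Matrix (Fin M) (Fin N) ℝ)
    (hS : ∀ i j, S i j = if (i : ℕ) = (j : ℕ) then σ j else 0) (τ : ℝ) (hτ : 0 ≤ τ)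
    (d m : ℝ) (hd0 : 0 ≤ d) (hdτ : d ≤ τ) (hd : ∀ i : Fin N, i ≠ ⟨0, hN⟩ → d ≤ |σ i - τ|)
    (hm : ∀ i, σ i ≤ m)
    (x : Fin M → ℝ) (y : Fin N → ℝ) :
    (x ⟨0, by omega⟩ = 0 → y ⟨0, hN⟩ = 0 → d ^ 2 * (x ⬝ᵥ x + y ⬝ᵥ y) ≤
      ((-τ) • x + S *ᵥ y) ⬝ᵥ ((-τ) • x + S *ᵥ y)
        + (Sᵀ *ᵥ x + (-τ) • y) ⬝ᵥ (Sᵀ *ᵥ x + (-τ) • y)) ∧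
    ((-τ) • x + S *ᵥ y) ⬝ᵥ ((-τ) • x + S *ᵥ y)
        + (Sᵀ *ᵥ x + (-τ) • y) ⬝ᵥ (Sᵀ *ᵥ x + (-τ) • y) ≤ (m + τ) ^ 2 * (x ⬝ᵥ x + y ⬝ᵥ y) := by
  obtain ⟨K, rfl⟩ := Nat.exists_eq_add_of_le hMN
  rw [diag_eq σ S hS, norm_eq']
  rw [mul_add, mul_add, Finset.mul_sum, Finset.mul_sum, Finset.mul_sum, Finset.mul_sum]
  constructor
  · intro hx hy
    refine add_le_add (Finset.sum_le_sum fun i _ => ?_) (Finset.sum_le_sum fun i _ => ?_)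
    · by_cases hi : i = ⟨0, hN⟩
      · subst hi
        have : x (Fin.castAdd K ⟨0, hN⟩) = 0 := hx
        rw [this, hy]; simp
      · have h1 : d ^ 2 ≤ (σ i - τ) ^ 2 := by
          rw [← sq_abs (σ i - τ)]; exact pow_le_pow_left₀ hd0 (hd i hi) 2
        have h2 := mul_nonneg (mul_nonneg (hσ i) hτ) (sq_nonneg (x (Fin.castAdd K i) - y i))
        have h3 := mul_le_mul_of_nonneg_right h1
          (add_nonneg (sq_nonneg (x (Fin.castAdd K i))) (sq_nonneg (y i)))
        nlinarith
    · rw [mul_pow]; gcongr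
  · have hm0 : 0 ≤ m := (hσ ⟨0, hN⟩).trans (hm _)
    refine add_le_add (Finset.sum_le_sum fun i _ => ?_) (Finset.sum_le_sum fun i _ => ?_)
    · have h1 : (σ i + τ) ^ 2 ≤ (m + τ) ^ 2 :=
        pow_le_pow_left₀ (add_nonneg (hσ i) hτ) (by linarith [hm i]) 2
      have h2 := mul_nonneg (mul_nonneg (hσ i) hτ) (sq_nonneg (x (Fin.castAdd K i) + y i))
      have h3 := mul_le_mul_of_nonneg_right h1
          (add_nonneg (sq_nonneg (x (Fin.castAdd K i))) (sq_nonneg (y i)))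
      nlinarith
    · rw [mul_pow]; gcongr; linarith

lemma orth_dot {m : Type*} [Fintype m] [DecidableEq m] (U : Matrix m m ℝ) (hU : Uᵀ * U = 1)
    (x y : m → ℝ) : (U *ᵥ x) ⬝ᵥ (U *ᵥ y) = x ⬝ᵥ y := by
  rw [dotProduct_mulVec, ← mulVec_transpose, mulVec_mulVec, hU, one_mulVec]

lemma svd_bounds {M N : ℕ} (hN : 0 < N) (hMN : N ≤ M) (A : Matrix (Fin M) (Fin N) ℝ)
    (U : Matrix (Fin M) (Fin M) ℝ) (V : Matrix (Fin N) (Fin N) ℝ)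
    (hU : Uᵀ * U = 1) (hV : Vᵀ * V = 1)
    (σ : Fin N → ℝ) (hσ : ∀ i, 0 ≤ σ i)
    (S : Matrix (Fin M) (Fin N) ℝ)
    (hS : ∀ i j, S i j = if (i : ℕ) = (j : ℕ) then σ j else 0)
    (hA : A = U * S * Vᵀ) (τ : ℝ) (hτ : 0 ≤ τ)
    (d m : ℝ) (hd0 : 0 ≤ d) (hdτ : d ≤ τ) (hd : ∀ i : Fin N, i ≠ ⟨0, hN⟩ → d ≤ |σ i - τ|)
    (hm : ∀ i, σ i ≤ m)
    (x : Fin M → ℝ) (y : Fin N → ℝ) :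
    ((fun i => U i ⟨0, by omega⟩) ⬝ᵥ x = 0 → (fun i => V i ⟨0, hN⟩) ⬝ᵥ y = 0 →
      d ^ 2 * (x ⬝ᵥ x + y ⬝ᵥ y) ≤
      ((-τ) • x + A *ᵥ y) ⬝ᵥ ((-τ) • x + A *ᵥ y)
        + (Aᵀ *ᵥ x + (-τ) • y) ⬝ᵥ (Aᵀ *ᵥ x + (-τ) • y)) ∧
    ((-τ) • x + A *ᵥ y) ⬝ᵥ ((-τ) • x + A *ᵥ y)
        + (Aᵀ *ᵥ x + (-τ) • y) ⬝ᵥ (Aᵀ *ᵥ x + (-τ) • y) ≤ (m + τ) ^ 2 * (x ⬝ᵥ x + y ⬝ᵥ y) := by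
  have hU' : U * Uᵀ = 1 := mul_eq_one_comm.mp hU
  have hV' : V * Vᵀ = 1 := mul_eq_one_comm.mp hV
  have key := diag_bounds hN hMN σ hσ S hS τ hτ d m hd0 hdτ hd hm (Uᵀ *ᵥ x) (Vᵀ *ᵥ y)
  have ex : x = U *ᵥ (Uᵀ *ᵥ x) := by rw [mulVec_mulVec, hU', one_mulVec]
  have ey : y = V *ᵥ (Vᵀ *ᵥ y) := by rw [mulVec_mulVec, hV', one_mulVec]
  have e1 : (-τ) • x + A *ᵥ y = U *ᵥ ((-τ) • (Uᵀ *ᵥ x) + S *ᵥ (Vᵀ *ᵥ y)) := by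
    rw [mulVec_add, mulVec_smul, ← ex, hA, mulVec_mulVec, mulVec_mulVec, Matrix.mul_assoc]
  have e2 : Aᵀ *ᵥ x + (-τ) • y = V *ᵥ (Sᵀ *ᵥ (Uᵀ *ᵥ x) + (-τ) • (Vᵀ *ᵥ y)) := by
    rw [mulVec_add, mulVec_smul, ← ey, hA, mulVec_mulVec, mulVec_mulVec, transpose_mul,
      transpose_mul, transpose_transpose, Matrix.mul_assoc]
  have e3 : x ⬝ᵥ x = (Uᵀ *ᵥ x) ⬝ᵥ (Uᵀ *ᵥ x) := by
    rw [orth_dot Uᵀ (by rw [transpose_transpose, hU'])]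
  have e4 : y ⬝ᵥ y = (Vᵀ *ᵥ y) ⬝ᵥ (Vᵀ *ᵥ y) := by
    rw [orth_dot Vᵀ (by rw [transpose_transpose, hV'])]
  rw [e1, e2, orth_dot U hU, orth_dot V hV, e3, e4]
  exact key

lemma svd_first {M N : ℕ} (hN : 0 < N) (hMN : N ≤ M) (A : Matrix (Fin M) (Fin N) ℝ)
    (U : Matrix (Fin M) (Fin M) ℝ) (V : Matrix (Fin N) (Fin N) ℝ)
    (hU : Uᵀ * U = 1) (hV : Vᵀ * V = 1)
    (σ : Fin N → ℝ) (S : Matrix (Fin M) (Fin N) ℝ)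
    (hS : ∀ i j, S i j = if (i : ℕ) = (j : ℕ) then σ j else 0)
    (hA : A = U * S * Vᵀ) :
    A *ᵥ (fun i => V i ⟨0, hN⟩) = σ ⟨0, hN⟩ • (fun i => U i ⟨0, by omega⟩) ∧
    Aᵀ *ᵥ (fun i => U i ⟨0, by omega⟩) = σ ⟨0, hN⟩ • (fun i => V i ⟨0, hN⟩) ∧
    (fun i => U i ⟨0, by omega⟩) ⬝ᵥ (fun i => U i ⟨0, by omega⟩) = 1 ∧
    (fun i => V i ⟨0, hN⟩) ⬝ᵥ (fun i => V i ⟨0, hN⟩) = 1 := by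
  have hM : 0 < M := by omega
  have eu : (fun i => U i ⟨0, hM⟩) = U *ᵥ (Pi.single ⟨0, hM⟩ 1) := by
    rw [mulVec_single_one]; rfl
  have ev : (fun i => V i ⟨0, hN⟩) = V *ᵥ (Pi.single ⟨0, hN⟩ 1) := by
    rw [mulVec_single_one]; rfl
  have s1 : S *ᵥ (Pi.single ⟨0, hN⟩ 1) = σ ⟨0, hN⟩ • Pi.single ⟨0, hM⟩ 1 := by
    rw [mulVec_single_one]
    ext i
    simp only [col_apply, hS, Pi.smul_apply, Pi.single_apply, Fin.ext_iff]
    simp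
  have s2 : Sᵀ *ᵥ (Pi.single ⟨0, hM⟩ 1) = σ ⟨0, hN⟩ • Pi.single ⟨0, hN⟩ 1 := by
    rw [mulVec_single_one]
    ext i
    simp only [col_apply, transpose_apply, hS, Pi.smul_apply, Pi.single_apply, Fin.ext_iff]
    by_cases h : i = ⟨0, hN⟩
    · subst h; simp
    · have h' : (i : ℕ) ≠ 0 := fun h0 => h (Fin.ext h0)
      simp [h', h'.symm]
  refine ⟨?_, ?_, ?_, ?_⟩
  · rw [eu, ev, hA, mulVec_mulVec, Matrix.mul_assoc, hV, Matrix.mul_one, ← mulVec_mulVec, s1,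
      mulVec_smul]
  · rw [eu, ev, hA, mulVec_mulVec, transpose_mul, transpose_mul, transpose_transpose,
      Matrix.mul_assoc, Matrix.mul_assoc, hU, Matrix.mul_one, ← mulVec_mulVec, s2, mulVec_smul]
  · rw [eu, orth_dot U hU]; simp
  · rw [ev, orth_dot V hV]; simp

lemma elim_dot {m n : Type*} [Fintype m] [Fintype n] (x x' : m → ℝ) (y y' : n → ℝ) :
    Sum.elim x y ⬝ᵥ Sum.elim x' y' = x ⬝ᵥ x' + y ⬝ᵥ y' := by
  simp [dotProduct, Fintype.sum_sum_type]

lemma proj_fix {m : Type*} [Fintype m] [DecidableEq m] (u x : m → ℝ) (hu : u ⬝ᵥ u = 1)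
    (h : (1 - vecMulVec u u) *ᵥ x = x) : u ⬝ᵥ x = 0 := by
  have : u ⬝ᵥ ((1 - vecMulVec u u) *ᵥ x) = u ⬝ᵥ x := by rw [h]
  rw [sub_mulVec, one_mulVec, vecMulVec_mulVec, op_smul_eq_smul, dotProduct_sub, dotProduct_smul,
    hu] at this
  simp at this
  exact this.symm

lemma blockB_mulVec {m n : Type*} [Fintype m] [Fintype n] [DecidableEq m] [DecidableEq n]
    (A : Matrix m n ℝ) (τ : ℝ) (x : m → ℝ) (y : n → ℝ) :
    (fromBlocks ((-τ) • 1) A Aᵀ ((-τ) • 1)) *ᵥ Sum.elim x y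
      = Sum.elim ((-τ) • x + A *ᵥ y) (Aᵀ *ᵥ x + (-τ) • y) := by
  rw [fromBlocks_mulVec]
  simp only [Sum.elim_comp_inl, Sum.elim_comp_inr, smul_mulVec, one_mulVec]

lemma pert_block {m n : Type*} [Fintype m] [Fintype n] [DecidableEq m] [DecidableEq n]
    (A : Matrix m n ℝ) (τ δ : ℝ) (hδ : 0 ≤ δ) (u : m → ℝ) (v : n → ℝ)
    (Hu : Matrix m m ℝ) (Hv : Matrix n n ℝ) (hHu : Huᵀ * Hu = 1) (hHv : Hvᵀ * Hv = 1)
    (hD : ∀ x y, u ⬝ᵥ x = 0 → v ⬝ᵥ y = 0 →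
      |(Hu *ᵥ x) ⬝ᵥ A *ᵥ (Hv *ᵥ y) - x ⬝ᵥ A *ᵥ y| ≤ δ * (vnorm x * vnorm y))
    (x x' : m → ℝ) (y y' : n → ℝ) (hx : u ⬝ᵥ x = 0) (hx' : u ⬝ᵥ x' = 0)
    (hy : v ⬝ᵥ y = 0) (hy' : v ⬝ᵥ y' = 0) :
    |Sum.elim (Hu *ᵥ x') (Hv *ᵥ y') ⬝ᵥ
        (fromBlocks ((-τ) • 1) A Aᵀ ((-τ) • 1)) *ᵥ Sum.elim (Hu *ᵥ x) (Hv *ᵥ y)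
      - Sum.elim x' y' ⬝ᵥ (fromBlocks ((-τ) • 1) A Aᵀ ((-τ) • 1)) *ᵥ Sum.elim x y|
      ≤ δ * (vnorm (Sum.elim x' y') * vnorm (Sum.elim x y)) := by
  have hT : ∀ (a : n → ℝ) (b : m → ℝ), a ⬝ᵥ Aᵀ *ᵥ b = b ⬝ᵥ A *ᵥ a := by
    intro a b
    rw [dotProduct_mulVec, vecMul_transpose, dotProduct_comm]
  rw [blockB_mulVec, blockB_mulVec, elim_dot, elim_dot]
  simp only [dotProduct_add, dotProduct_smul, hT, orth_dot Hu hHu, orth_dot Hv hHv, smul_eq_mul]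
  have d1 := hD x' y hx' hy
  have d2 := hD x y' hx hy'
  have n1 := vnorm_sq' (Sum.elim x y)
  have n2 := vnorm_sq' (Sum.elim x' y')
  rw [elim_dot, ← vnorm_sq', ← vnorm_sq'] at n1 n2
  have p1 := vnorm_nonneg' x
  have p2 := vnorm_nonneg' x'
  have p3 := vnorm_nonneg' y
  have p4 := vnorm_nonneg' y'
  have cs : vnorm x' * vnorm y + vnorm x * vnorm y' ≤
      vnorm (Sum.elim x' y') * vnorm (Sum.elim x y) := by
    refine abs_le_of_sq_le_sq' ?_ (mul_nonneg (vnorm_nonneg' _) (vnorm_nonneg' _)) |>.2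
    rw [mul_pow, n1, n2]
    nlinarith [sq_nonneg (vnorm x' * vnorm x - vnorm y' * vnorm y)]
  have cs' := mul_le_mul_of_nonneg_left cs hδ
  rw [abs_le] at d1 d2 ⊢
  constructor <;> linarith

lemma proj_vnorm_le {ι : Type*} [Fintype ι] (Q : Matrix ι ι ℝ) (hT : Qᵀ = Q)
    (hQ : Q * Q = Q) (z : ι → ℝ) : vnorm (Q *ᵥ z) ≤ vnorm z := by
  have h1 : vnorm (Q *ᵥ z) ^ 2 = z ⬝ᵥ Q *ᵥ z := by
    rw [vnorm_sq', dotProduct_mulVec, ← mulVec_transpose, hT, mulVec_mulVec, hQ, dotProduct_comm]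
  have h2 := (le_abs_self _).trans (dot_le_vnorm z (Q *ᵥ z))
  have h3 := vnorm_nonneg' (Q *ᵥ z)
  have h4 := vnorm_nonneg' z
  rcases h3.eq_or_lt with h | h
  · rw [← h]; exact h4
  · nlinarith

lemma proj_idem {m : Type*} [Fintype m] [DecidableEq m] (u : m → ℝ) (hu : u ⬝ᵥ u = 1) :
    (1 - vecMulVec u u) * (1 - vecMulVec u u) = 1 - vecMulVec u u := by
  rw [mul_sub, sub_mul, sub_mul, vecMulVec_mul_vecMulVec, hu, one_smul]
  simp

lemma lower_bound {m n : Type*} [Fintype m] [Fintype n] [DecidableEq m] [DecidableEq n]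
    (A : Matrix m n ℝ) (τ d δ s1 : ℝ) (u ut : m → ℝ) (v vt : n → ℝ)
    (hu : u ⬝ᵥ u = 1) (hv : v ⬝ᵥ v = 1) (hut : ut ⬝ᵥ ut = 1) (hvt : vt ⬝ᵥ vt = 1)
    (hAv : A *ᵥ v = s1 • u) (hAu : Aᵀ *ᵥ u = s1 • v)
    (hδ : δ = specNorm A *
      (Real.sqrt (1 - (u ⬝ᵥ ut) ^ 2) + Real.sqrt (1 - (v ⬝ᵥ vt) ^ 2)) ^ 2)
    (B P : Matrix (m ⊕ n) (m ⊕ n) ℝ) (hB : B = fromBlocks ((-τ) • 1) A Aᵀ ((-τ) • 1))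
    (hP : P = fromBlocks (1 - vecMulVec ut ut) 0 0 (1 - vecMulVec vt vt))
    (hd : 0 < d)
    (hlow : ∀ x y, u ⬝ᵥ x = 0 → v ⬝ᵥ y = 0 →
      d * vnorm (Sum.elim x y) ≤ vnorm (B *ᵥ Sum.elim x y))
    (z : m ⊕ n → ℝ) (hz : P *ᵥ z = z) :
    (d - δ) * vnorm z ≤ vnorm ((P * B * P) *ᵥ z) := by
  obtain ⟨Hu, g, k, hHuT, hHuH, hHuP, hug, hg, hk0, hk1, hHu⟩ := householder u ut hu hut
  obtain ⟨Hv, h, l, hHvT, hHvH, hHvP, hvh, hh, hl0, hl1, hHv⟩ := householder v vt hv hvt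
  have hδ0 : 0 ≤ δ := by rw [hδ]; exact mul_nonneg (specNorm_nonneg' A) (sq_nonneg _)
  have hD : ∀ x y, u ⬝ᵥ x = 0 → v ⬝ᵥ y = 0 →
      |(Hu *ᵥ x) ⬝ᵥ A *ᵥ (Hv *ᵥ y) - x ⬝ᵥ A *ᵥ y| ≤ δ * (vnorm x * vnorm y) := by
    intro x y hx hy
    rw [hHu x hx, hHv y hy, hδ]
    refine perturb A u v hu hv s1 hAv hAu g h k l _ _ hk0 hk1 hl0 hl1 hug hvh hg hh ?_ ?_ x y hx hy
    · exact Real.sqrt_le_one.mpr (by nlinarith [sq_nonneg (u ⬝ᵥ ut)])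
    · exact Real.sqrt_le_one.mpr (by nlinarith [sq_nonneg (v ⬝ᵥ vt)])
  set R : Matrix (m ⊕ n) (m ⊕ n) ℝ := fromBlocks Hu 0 0 Hv with hR
  have hRv : ∀ x y, R *ᵥ Sum.elim x y = Sum.elim (Hu *ᵥ x) (Hv *ᵥ y) := by
    intro x y
    rw [hR, fromBlocks_mulVec]; simp
  set Q : Matrix (m ⊕ n) (m ⊕ n) ℝ :=
    fromBlocks (1 - vecMulVec u u) 0 0 (1 - vecMulVec v v) with hQ
  have hRT : Rᵀ = R := by rw [hR, fromBlocks_transpose, hHuT, hHvT]; simp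
  have hRR : R * R = 1 := by rw [hR, fromBlocks_multiply]; simp [hHuH, hHvH]
  have hPR : P = R * Q * R := by
    rw [hP, hR, hQ, fromBlocks_multiply, fromBlocks_multiply]
    simp [hHuP, hHvP]
  have hQT : Qᵀ = Q := by
    rw [hQ, fromBlocks_transpose]; simp [transpose_vecMulVec]
  have hQB : Q * B = B * Q := by
    have hAu' : u ᵥ* A = s1 • v := by rw [← mulVec_transpose, hAu]
    have hAv' : v ᵥ* Aᵀ = s1 • u := by rw [vecMul_transpose, hAv]
    rw [hQ, hB, fromBlocks_multiply, fromBlocks_multiply]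
    simp only [Matrix.zero_mul, Matrix.mul_zero, add_zero, zero_add, sub_mul, mul_sub,
      Matrix.sub_mul, Matrix.mul_sub, Matrix.one_mul, Matrix.mul_one, vecMulVec_mul, mul_vecMulVec,
      hAu, hAv, hAu', hAv', smul_vecMulVec, vecMulVec_smul, Matrix.mul_smul,
      smul_mulVec, one_mulVec, smul_zero]
  clear_value R
  have hRn : ∀ w, vnorm (R *ᵥ w) = vnorm w := by
    intro w
    have : vnorm (R *ᵥ w) ^ 2 = vnorm w ^ 2 := by
      rw [vnorm_sq', vnorm_sq', orth_dot R (by rw [hRT, hRR])]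
    exact (pow_left_inj₀ (vnorm_nonneg' _) (vnorm_nonneg' _) two_ne_zero).mp this
  set y := R *ᵥ z with hy
  have hQy : Q *ᵥ y = y := by
    have : R *ᵥ (P *ᵥ z) = y := by rw [hz]
    rw [hPR, mulVec_mulVec, Matrix.mul_assoc, ← Matrix.mul_assoc R, hRR, Matrix.one_mul,
      ← mulVec_mulVec] at this
    exact this
  have hyn : vnorm y = vnorm z := hRn z
  have hzy : z = R *ᵥ y := by rw [hy, mulVec_mulVec, hRR, one_mulVec]
  have hB1 : (P * B * P) *ᵥ z = R *ᵥ (Q *ᵥ (R *ᵥ (B *ᵥ (R *ᵥ y)))) := by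
    rw [← mulVec_mulVec, hz, ← hzy, hPR]
    simp only [mulVec_mulVec, Matrix.mul_assoc]
  rw [hB1, hRn, ← hyn]
  set t := B *ᵥ y with ht
  have hQt : Q *ᵥ t = t := by
    rw [ht, mulVec_mulVec, hQB, ← mulVec_mulVec, hQy]
  have orth : ∀ w, Q *ᵥ w = w → u ⬝ᵥ (w ∘ Sum.inl) = 0 ∧ v ⬝ᵥ (w ∘ Sum.inr) = 0 := by
    intro w hw
    rw [hQ, fromBlocks_mulVec] at hw
    constructor
    · apply proj_fix u _ hu
      have := congrArg (fun f => f ∘ Sum.inl) hw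
      simpa using this
    · apply proj_fix v _ hv
      have := congrArg (fun f => f ∘ Sum.inr) hw
      simpa using this
  have sp : ∀ w : m ⊕ n → ℝ, Sum.elim (w ∘ Sum.inl) (w ∘ Sum.inr) = w := fun w =>
    Sum.elim_comp_inl_inr w
  obtain ⟨oy1, oy2⟩ := orth y hQy
  obtain ⟨ot1, ot2⟩ := orth t hQt
  have hp := pert_block A τ δ hδ0 u v Hu Hv (by rw [hHuT, hHuH]) (by rw [hHvT, hHvH]) hD
    (y ∘ Sum.inl) (t ∘ Sum.inl) (y ∘ Sum.inr) (t ∘ Sum.inr) oy1 ot1 oy2 ot2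
  rw [← hRv, ← hRv, sp, sp, ← hB] at hp
  have hl := hlow _ _ oy1 oy2
  rw [sp, ← ht] at hl
  rw [← ht, ← vnorm_sq'] at hp
  have e1 : (R *ᵥ t) ⬝ᵥ B *ᵥ (R *ᵥ y) = t ⬝ᵥ (Q *ᵥ (R *ᵥ (B *ᵥ (R *ᵥ y)))) := by
    conv_rhs => rw [dotProduct_mulVec, ← mulVec_transpose, hQT, hQt, dotProduct_mulVec,
      ← mulVec_transpose, hRT]
  rw [e1] at hp
  set q := Q *ᵥ (R *ᵥ (B *ᵥ (R *ᵥ y)))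
  have h1 := (le_abs_self _).trans (dot_le_vnorm t q)
  have h2 := (abs_le.mp hp).1
  have ny := vnorm_nonneg' y
  rcases (vnorm_nonneg' t).eq_or_lt with h0 | h0
  · rw [← h0] at hl
    have : vnorm y = 0 := by nlinarith
    rw [this, mul_zero]
    exact vnorm_nonneg' _
  · have h3 : vnorm t * (vnorm t - δ * vnorm y) ≤ vnorm t * vnorm q := by nlinarith
    have h4 := le_of_mul_le_mul_left h3 h0
    linarith

/-- Theorem 3.5(iii). MINRES bound for the JDSVD correction equation
with approximate singular vectors, in the interior case. -/
theorem minres_bound_approx_interior {M N : ℕ} (hN : 2 ≤ N) (hMN : N ≤ M)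
    (A : Matrix (Fin M) (Fin N) ℝ)
    (U : Matrix (Fin M) (Fin M) ℝ) (V : Matrix (Fin N) (Fin N) ℝ)
    (hU : Uᵀ * U = 1) (hV : Vᵀ * V = 1)
    (σ : Fin N → ℝ) (hσ : ∀ i, 0 ≤ σ i)
    (S : Matrix (Fin M) (Fin N) ℝ)
    (hS : ∀ i j, S i j = if (i : ℕ) = (j : ℕ) then σ j else 0)
    (hA : A = U * S * Vᵀ)
    (τ : ℝ) (hτ0 : 0 ≤ τ)
    (hclosest : ∀ i : Fin N, i ≠ ⟨0, by omega⟩ → |σ ⟨0, by omega⟩ - τ| < |σ i - τ|)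
    (hτσ : ∀ i : Fin N, τ ≠ σ i)
    (σmax σmax2 σmin σmin2 : ℝ)
    (hσmax : IsGreatest (Set.range σ) σmax)
    (hσmax2 : IsGreatest (σ '' {i : Fin N | i ≠ ⟨0, by omega⟩}) σmax2)
    (hσmin : IsLeast (Set.range σ) σmin)
    (hσmin2 : IsLeast (σ '' {i : Fin N | i ≠ ⟨0, by omega⟩}) σmin2)
    (hτ1 : (σmin + σmin2) / 2 < τ) (hτ2 : τ < (σmax + σmax2) / 2)
    (d2 : ℝ)
    (hd2 : IsLeast ((fun i => |σ i - τ|) '' {i : Fin N | i ≠ ⟨0, by omega⟩}) d2)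
    (u1 : Fin M → ℝ) (hu1 : u1 = fun i => U i ⟨0, by omega⟩)
    (v1 : Fin N → ℝ) (hv1 : v1 = fun i => V i ⟨0, by omega⟩)
    (u1t : Fin M → ℝ) (hu1t : ∑ i, u1t i ^ 2 = 1)
    (v1t : Fin N → ℝ) (hv1t : ∑ i, v1t i ^ 2 = 1)
    (δ : ℝ)
    (hδ : δ = specNorm A *
      (Real.sqrt (1 - (u1 ⬝ᵥ u1t) ^ 2) + Real.sqrt (1 - (v1 ⬝ᵥ v1t) ^ 2)) ^ 2)
    (hδsmall : δ < d2)
    (B P B1 : Matrix (Fin M ⊕ Fin N) (Fin M ⊕ Fin N) ℝ)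
    (hB : B = Matrix.fromBlocks ((-τ) • 1) A Aᵀ ((-τ) • 1))
    (hP : P = Matrix.fromBlocks (1 - vecMulVec u1t u1t) 0 0 (1 - vecMulVec v1t v1t))
    (hB1 : B1 = P * B * P)
    (r : Fin M ⊕ Fin N → ℝ) (hr : P *ᵥ r = r) :
    ∀ j : ℕ, ∃ w ∈ Krylov B1 r j,
      vnorm (B1 *ᵥ w + r) ≤
        2 * (1 - 2 / (1 + (σmax + τ + δ) / (d2 - δ))) ^ (j / 2) * vnorm r := by
  have hN0 : 0 < N := by omega
  obtain ⟨hAv, hAu, huu, hvv⟩ := svd_first hN0 hMN A U V hU hV σ S hS hA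
  rw [← hu1] at hAv hAu huu
  rw [← hv1] at hAv hAu hvv
  -- sizes
  obtain ⟨i0, hi0, hi0e⟩ := hd2.1
  have hd2pos : 0 < d2 := by
    rw [← hi0e]
    exact abs_pos.mpr (sub_ne_zero.mpr (hτσ i0).symm)
  have hd2le : ∀ i : Fin N, i ≠ ⟨0, hN0⟩ → d2 ≤ |σ i - τ| := fun i hi => hd2.2 ⟨i, hi, rfl⟩
  have hmaxle : ∀ i, σ i ≤ σmax := fun i => hσmax.2 ⟨i, rfl⟩
  have hd2τ : d2 ≤ τ := by
    obtain ⟨i2, hi2, hi2e⟩ := hσmin2.1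
    obtain ⟨i1, hi1e⟩ := hσmin.1
    have h1 : σmin2 < τ := by
      by_cases h : i1 = ⟨0, hN0⟩
      · by_contra hcon
        push Not at hcon
        have hc := hclosest i2 hi2
        rw [h] at hi1e
        rw [hi1e, hi2e, abs_of_nonneg (sub_nonneg.mpr hcon)] at hc
        have := neg_abs_le (σmin - τ)
        linarith
      · have := hσmin2.2 ⟨i1, h, hi1e⟩
        linarith
    have h2 := hd2le i2 hi2
    rw [hi2e, abs_of_neg (by linarith)] at h2
    have := hσ i2
    linarith
  have hδ0 : 0 ≤ δ := by rw [hδ]; exact mul_nonneg (specNorm_nonneg' A) (sq_nonneg _)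
  have hmaxτ : τ < σmax := by
    have : σmax2 ≤ σmax := by
      obtain ⟨i2, hi2, hi2e⟩ := hσmax2.1
      rw [← hi2e]; exact hmaxle i2
    linarith
  have hut : u1t ⬝ᵥ u1t = 1 := by rw [← hu1t]; simp [dotProduct, sq]
  have hvt : v1t ⬝ᵥ v1t = 1 := by rw [← hv1t]; simp [dotProduct, sq]
  have hsv := svd_bounds hN0 hMN A U V hU hV σ hσ S hS hA τ hτ0 d2 σmax hd2pos.le hd2τ hd2le hmaxle
  have hlow : ∀ x y, u1 ⬝ᵥ x = 0 → v1 ⬝ᵥ y = 0 →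
      d2 * vnorm (Sum.elim x y) ≤ vnorm (B *ᵥ Sum.elim x y) := by
    intro x y hx hy
    have h := (hsv x y).1 (by rw [← hu1]; exact hx) (by rw [← hv1]; exact hy)
    refine (abs_le_of_sq_le_sq' ?_ (vnorm_nonneg' _)).2
    rw [mul_pow, vnorm_sq', vnorm_sq', hB, blockB_mulVec, elim_dot, elim_dot]
    exact h
  have hup : ∀ z, vnorm (B *ᵥ z) ≤ (σmax + τ) * vnorm z := by
    intro z
    have h := (hsv (z ∘ Sum.inl) (z ∘ Sum.inr)).2
    rw [← Sum.elim_comp_inl_inr z]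
    refine (abs_le_of_sq_le_sq' ?_ (mul_nonneg (by linarith) (vnorm_nonneg' _))).2
    rw [mul_pow, vnorm_sq', vnorm_sq', hB, blockB_mulVec, elim_dot, elim_dot]
    exact h
  have hPT : Pᵀ = P := by
    rw [hP, fromBlocks_transpose]; simp [transpose_vecMulVec]
  have hPP : P * P = P := by
    rw [hP, fromBlocks_multiply]
    simp [proj_idem u1t hut, proj_idem v1t hvt]
  have hBT : Bᵀ = B := by
    rw [hB, fromBlocks_transpose]; simp
  have hB1T : B1ᵀ = B1 := by
    rw [hB1, transpose_mul, transpose_mul, hPT, hBT, Matrix.mul_assoc]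
  have hlb : ∀ z, P *ᵥ z = z → (d2 - δ) * vnorm z ≤ vnorm (B1 *ᵥ z) := by
    intro z hz
    rw [hB1]
    exact lower_bound A τ d2 δ _ u1 u1t v1 v1t huu hvv hut hvt hAv hAu hδ B P hB hP hd2pos hlow z hz
  have hPB1 : P * B1 = B1 := by
    rw [hB1, ← Matrix.mul_assoc, ← Matrix.mul_assoc, hPP]
  have hB1P : B1 * P = B1 := by
    rw [hB1, Matrix.mul_assoc, hPP]
  have hpos : ∀ z : Fin M ⊕ Fin N → ℝ, z ≠ 0 → 0 < vnorm z := by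
    intro z hz
    refine lt_of_le_of_ne (vnorm_nonneg' z) fun h0 => hz ?_
    have := vnorm_sq' z
    rw [← h0] at this
    exact dotProduct_self_eq_zero.mp (by rw [← this]; simp)
  refine minres_abs B1 hB1T r (d2 - δ) (σmax + τ + δ) (by linarith) (by linarith) ?_
  intro z l hz0 hzl hzr
  have hzn := hpos z hz0
  have hsm : vnorm (l • z) = |l| * vnorm z := by
    rw [vnorm_eq, vnorm_eq, WithLp.toLp_smul, norm_smul, Real.norm_eq_abs]
  by_cases hl : l = 0
  · exfalso
    apply hzr
    have h1 : B1 *ᵥ (P *ᵥ z) = 0 := by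
      rw [mulVec_mulVec, hB1P, hzl, hl, zero_smul]
    have h2 := hlb (P *ᵥ z) (by rw [mulVec_mulVec, hPP])
    have h3 : P *ᵥ z = 0 := by
      by_contra hne
      have h4 := hpos _ hne
      rw [h1] at h2
      have h5 : vnorm (0 : Fin M ⊕ Fin N → ℝ) = 0 := by simp [vnorm]
      rw [h5] at h2
      have := mul_pos (sub_pos.mpr hδsmall) h4
      linarith
    rw [← hr, dotProduct_mulVec, ← mulVec_transpose, hPT, h3, zero_dotProduct]
  · have hPz : P *ᵥ z = z := by
      have h1 : P *ᵥ (l • z) = l • z := by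
        rw [← hzl, mulVec_mulVec, hPB1]
      rw [mulVec_smul] at h1
      exact smul_right_injective _ hl h1
    constructor
    · have h1 := hlb z hPz
      rw [hzl, hsm] at h1
      exact le_of_mul_le_mul_right h1 hzn
    · have h1 : vnorm (B1 *ᵥ z) ≤ (σmax + τ) * vnorm z := by
        rw [hB1, ← mulVec_mulVec, hPz, ← mulVec_mulVec]
        exact (proj_vnorm_le P hPT hPP _).trans (hup z)
      rw [hzl, hsm] at h1
      have := le_of_mul_le_mul_right h1 hzn
      linarith
end

section
/- Assume τ > (σ_max + σ_max,m+1)/2 and let r ∈ ℝ^{M+N} satisfy Π_m r = r. Then for every j ∈ ℕ there exists w ∈ K_j(B_m, r) such that ‖B_m w + r‖ ≤ 2 · (1 − 2/(1 + √((τ + σ_max,m+1)/(τ − σ_max,m+1))))^j · ‖r‖; that is, the j-th MINRES residual for the preconditioned correction equation B_m w = −r with exact singular subspaces satisfies this bound. -/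
open Matrix

open Polynomial in
theorem aux_dick_deg (a : ℝ) (n : ℕ) : (dickson 1 a n).natDegree ≤ n := by
  induction n using Nat.strong_induction_on with
  | _ n ih =>
    match n with
    | 0 =>
      rw [dickson_zero]
      norm_num
    | 1 => simp
    | k+2 =>
      rw [dickson_add_two]
      refine (natDegree_sub_le _ _).trans (max_le ?_ ?_)
      · refine natDegree_mul_le.trans ?_
        have := ih (k+1) (by omega)
        rw [natDegree_X]; omega
      · refine (natDegree_C_mul_le _ _).trans ?_
        have := ih k (by omega)
        omega

open Polynomial in
theorem aux_dick_cos (s θ : ℝ) (n : ℕ) :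
    (dickson 1 (s^2) n).eval (2 * (s * Real.cos θ)) = 2 * s^n * Real.cos (n * θ) := by
  induction n using Nat.strong_induction_on with
  | _ n ih =>
    match n with
    | 0 => simp [dickson_zero]; norm_num
    | 1 => simp; ring
    | k+2 =>
      rw [dickson_add_two]
      simp only [eval_sub, eval_mul, eval_X, eval_C]
      rw [ih (k+1) (by omega), ih k (by omega)]
      push_cast
      have h1 : ((k:ℝ)+2) * θ = ((k:ℝ)+1)*θ + θ := by ring
      have h2 : (k:ℝ) * θ = ((k:ℝ)+1)*θ - θ := by ring
      rw [h1, h2, Real.cos_add, Real.cos_sub]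
      ring

open Polynomial in
theorem aux_dick_pow (a b : ℝ) (n : ℕ) :
    (dickson 1 (a*b) n).eval (a + b) = a^n + b^n := by
  induction n using Nat.strong_induction_on with
  | _ n ih =>
    match n with
    | 0 => simp [dickson_zero]; norm_num
    | 1 => simp
    | k+2 =>
      rw [dickson_add_two]
      simp only [eval_sub, eval_mul, eval_X, eval_C]
      rw [ih (k+1) (by omega), ih k (by omega)]
      ring

open Polynomial in
theorem aux_poly (s τ : ℝ) (hs : 0 ≤ s) (hst : s < τ) (j : ℕ) :
    ∃ p : ℝ[X], p.natDegree ≤ j ∧ p.eval 0 = 1 ∧ ∀ y, |y| ≤ s →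
      |p.eval (y - τ)| ≤ 2 * (1 - 2 / (1 + Real.sqrt ((τ + s) / (τ - s)))) ^ j := by
  set u := Real.sqrt (τ + s) with hu
  set v := Real.sqrt (τ - s) with hv
  have hv0 : 0 < v := Real.sqrt_pos.2 (by linarith)
  have huv : v ≤ u := Real.sqrt_le_sqrt (by linarith)
  have hu2 : u^2 = τ + s := Real.sq_sqrt (by linarith)
  have hv2 : v^2 = τ - s := Real.sq_sqrt (by linarith)
  have hρ : 1 - 2 / (1 + Real.sqrt ((τ + s) / (τ - s))) = (u - v)/(u+v) := by
    rw [Real.sqrt_div (by linarith), ← hu, ← hv]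
    have : 0 < v + u := by linarith
    have : 0 < u + v := by linarith
    field_simp
    ring
  rw [hρ]
  set ρ := (u - v)/(u+v) with hρd
  set a := (u+v)^2/2 with ha
  set b := (u-v)^2/2 with hb
  have hab : a * b = s^2 := by
    have : s = (u^2 - v^2)/2 := by rw [hu2, hv2]; ring
    rw [this, ha, hb]; ring
  have hapb : a + b = 2 * τ := by
    have : 2 * τ = u^2 + v^2 := by rw [hu2, hv2]; ring
    rw [this, ha, hb]; ring
  have hsa : s = ρ * a := by
    have : s = (u^2 - v^2)/2 := by rw [hu2, hv2]; ring
    rw [this, hρd, ha]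
    have : 0 < u + v := by linarith
    field_simp
    ring
  have ha0 : 0 < a := by
    have : 0 < u + v := by linarith
    positivity
  have hb0 : 0 ≤ b := by positivity
  have hρ0 : 0 ≤ ρ := div_nonneg (by linarith) (by linarith)
  have hD : 0 < a^j + b^j := by positivity
  refine ⟨Polynomial.C (a^j+b^j)⁻¹ * (dickson 1 (s^2) j).comp (Polynomial.C 2 * X + Polynomial.C (2*τ)), ?_, ?_, ?_⟩
  · refine (natDegree_C_mul_le _ _).trans ?_
    refine natDegree_comp_le.trans ?_
    have h1 := aux_dick_deg (s^2) j
    have h2 : (Polynomial.C 2 * X + Polynomial.C (2*τ) : ℝ[X]).natDegree ≤ 1 := natDegree_linear_le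
    calc _ ≤ j * 1 := Nat.mul_le_mul h1 h2
      _ = j := by simp
  · have := aux_dick_pow a b j
    rw [hab, hapb] at this
    simp only [eval_mul, eval_C, eval_comp, eval_add, eval_X, mul_zero, zero_add, this]
    exact inv_mul_cancel₀ hD.ne'
  · intro y hy
    obtain ⟨θ, hθ⟩ : ∃ θ, y = s * Real.cos θ := by
      rcases hs.eq_or_lt with h0 | h0
      · refine ⟨0, ?_⟩
        rw [← h0] at hy ⊢
        simpa using hy
      · refine ⟨Real.arccos (y/s), ?_⟩
        have := abs_le.1 hy
        rw [Real.cos_arccos]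
        · field_simp
        · rw [le_div_iff₀ h0]; linarith
        · rw [div_le_iff₀ h0]; linarith
    have := aux_dick_cos s θ j
    simp only [eval_mul, eval_C, eval_comp, eval_add, eval_X]
    rw [show 2 * (y - τ) + 2 * τ = 2 * (s * Real.cos θ) by rw [hθ]; ring, this]
    rw [abs_mul, abs_mul, abs_of_pos (inv_pos.2 hD), abs_of_nonneg (by positivity : 0 ≤ 2 * s^j)]
    rw [inv_mul_le_iff₀ hD]
    calc _ ≤ 2 * s^j * 1 := by gcongr; exact Real.abs_cos_le_one _
      _ = a^j * (2 * ρ^j) := by rw [hsa, mul_pow]; ring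
      _ ≤ _ := by gcongr; linarith [pow_nonneg hb0 j]

open Polynomial in
theorem aux_krylov {ι : Type*} [Fintype ι] [DecidableEq ι]
    (B : Matrix ι ι ℝ) (r : ι → ℝ) (j : ℕ) (p : ℝ[X]) (hd : p.natDegree ≤ j)
    (h0 : p.eval 0 = 1) : ∃ w ∈ Krylov B r j, B *ᵥ w + r = (aeval B p) *ᵥ r := by
  refine ⟨(aeval B p.divX) *ᵥ r, ?_, ?_⟩
  · by_cases hj : p.natDegree = 0
    · have : p.divX = 0 := by rw [eq_C_of_natDegree_eq_zero hj]; simp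
      rw [this]; simp
    rw [aeval_eq_sum_range, Matrix.sum_mulVec]
    refine Submodule.sum_mem _ fun i hi => ?_
    rw [Matrix.smul_mulVec]
    refine Submodule.smul_mem _ _ (Submodule.subset_span ⟨i, ?_, rfl⟩)
    rw [natDegree_divX_eq_natDegree_tsub_one, Finset.mem_range] at hi
    omega
  · conv_rhs => rw [← X_mul_divX_add p]
    rw [coeff_zero_eq_eval_zero, h0]
    simp [Matrix.add_mulVec, Matrix.mulVec_mulVec]

open Polynomial in
theorem aux_aeval_mulVec_congr {ι : Type*} [Fintype ι] [DecidableEq ι]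
    (B C P : Matrix ι ι ℝ) (r : ι → ℝ) (hr : P *ᵥ r = r)
    (h1 : ∀ v, P *ᵥ v = v → B *ᵥ v = C *ᵥ v) (h2 : ∀ v, P *ᵥ v = v → P *ᵥ (C *ᵥ v) = C *ᵥ v)
    (p : ℝ[X]) : (aeval B p) *ᵥ r = (aeval C p) *ᵥ r := by
  have key : ∀ i : ℕ, (B^i) *ᵥ r = (C^i) *ᵥ r ∧ P *ᵥ ((C^i) *ᵥ r) = (C^i) *ᵥ r := by
    intro i
    induction i with
    | zero => simp [hr]
    | succ k ih =>
      have e : (C^(k+1)) *ᵥ r = C *ᵥ (C^k *ᵥ r) := by rw [pow_succ', Matrix.mulVec_mulVec]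
      constructor
      · rw [e, pow_succ', ← Matrix.mulVec_mulVec, ih.1, h1 _ ih.2]
      · rw [e, h2 _ ih.2]
  rw [aeval_eq_sum_range, aeval_eq_sum_range, Matrix.sum_mulVec, Matrix.sum_mulVec]
  refine Finset.sum_congr rfl fun i _ => ?_
  rw [Matrix.smul_mulVec, Matrix.smul_mulVec, (key i).1]

theorem aux_vnorm_sq {ι : Type*} [Fintype ι] (x : ι → ℝ) : vnorm x = Real.sqrt (x ⬝ᵥ x) := by
  simp [vnorm, dotProduct, sq]

theorem aux_vnorm_orth {ι : Type*} [Fintype ι] [DecidableEq ι] (Q : Matrix ι ι ℝ)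
    (hQ : Qᵀ * Q = 1) (x : ι → ℝ) : vnorm (Q *ᵥ x) = vnorm x := by
  rw [aux_vnorm_sq, aux_vnorm_sq, Matrix.dotProduct_mulVec, Matrix.vecMul_mulVec, hQ,
    Matrix.vecMul_one]

open Polynomial in
theorem aux_conj {ι : Type*} [Fintype ι] [DecidableEq ι] (Q : Matrix ι ι ℝ)
    (hQ : Qᵀ * Q = 1) (D : Matrix ι ι ℝ) (p : ℝ[X]) :
    aeval (Q * D * Qᵀ) p = Q * aeval D p * Qᵀ := by
  have hQ' : Q * Qᵀ = 1 := mul_eq_one_comm.1 hQ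
  have key : ∀ i : ℕ, (Q * D * Qᵀ)^i = Q * D^i * Qᵀ := by
    intro i
    induction i with
    | zero => simp [hQ']
    | succ k ih =>
      rw [pow_succ, ih, pow_succ]
      calc _ = Q * D^k * (Qᵀ * Q) * D * Qᵀ := by simp only [Matrix.mul_assoc]
        _ = _ := by rw [hQ]; simp only [Matrix.mul_assoc, Matrix.one_mul]
  rw [aeval_eq_sum_range, aeval_eq_sum_range, Finset.mul_sum, Finset.sum_mul]
  refine Finset.sum_congr rfl fun i _ => ?_
  rw [key]; simp

open Polynomial in
theorem aux_bound {ι : Type*} [Fintype ι] [DecidableEq ι] (Q : Matrix ι ι ℝ)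
    (hQ : Qᵀ * Q = 1) (d : ι → ℝ) (p : ℝ[X]) (c : ℝ) (hc : ∀ i, |p.eval (d i)| ≤ c)
    (hc0 : 0 ≤ c) (r : ι → ℝ) :
    vnorm ((aeval (Q * Matrix.diagonal d * Qᵀ) p) *ᵥ r) ≤ c * vnorm r := by
  have hQ' : Q * Qᵀ = 1 := mul_eq_one_comm.1 hQ
  have hd : aeval (Matrix.diagonal d) p = Matrix.diagonal (fun i => p.eval (d i)) := by
    rw [aeval_eq_sum_range]
    ext i k
    rw [Matrix.sum_apply]
    simp only [Matrix.diagonal_pow, Matrix.smul_apply, Matrix.diagonal_apply]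
    split_ifs
    · rw [eval_eq_sum_range]; simp
    · simp
  rw [aux_conj Q hQ, hd, ← Matrix.mulVec_mulVec, ← Matrix.mulVec_mulVec, aux_vnorm_orth Q hQ,
    ← aux_vnorm_orth Qᵀ (by simpa using hQ') r]
  set y := Qᵀ *ᵥ r
  unfold vnorm
  rw [show c = Real.sqrt (c^2) from (Real.sqrt_sq hc0).symm, ← Real.sqrt_mul (by positivity)]
  apply Real.sqrt_le_sqrt
  rw [Finset.mul_sum]
  refine Finset.sum_le_sum fun i _ => ?_
  rw [Matrix.mulVec_diagonal, mul_pow]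
  exact mul_le_mul_of_nonneg_right
    (sq_le_sq.2 (by rw [abs_of_nonneg hc0]; exact hc i)) (sq_nonneg _)

theorem aux_diag {ι : Type*} [Fintype ι] [DecidableEq ι] (K : Matrix ι ι ℝ) (hK : Kᵀ = K)
    (s : ℝ) (hdiag : ∀ i, K i i = 0) (hrow : ∀ i, ∑ k, |K i k| ≤ s) :
    ∃ (Q : Matrix ι ι ℝ) (d : ι → ℝ), Qᵀ * Q = 1 ∧ K = Q * Matrix.diagonal d * Qᵀ ∧
      ∀ i, |d i| ≤ s := by
  have hH : K.IsHermitian := by rw [Matrix.IsHermitian, Matrix.conjTranspose_eq_transpose_of_trivial, hK]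
  refine ⟨hH.eigenvectorUnitary, hH.eigenvalues, ?_, ?_, ?_⟩
  · have := Unitary.coe_star_mul_self hH.eigenvectorUnitary
    rwa [Matrix.star_eq_conjTranspose, Matrix.conjTranspose_eq_transpose_of_trivial] at this
  · have := hH.spectral_theorem
    rw [Unitary.conjStarAlgAut_apply] at this
    conv_lhs => rw [this]
    rw [Matrix.star_eq_conjTranspose, Matrix.conjTranspose_eq_transpose_of_trivial]
    rfl
  · intro i
    have hev : Module.End.HasEigenvalue (Matrix.toLin' K) (hH.eigenvalues i) := by
      refine Module.End.hasEigenvalue_of_hasEigenvector (x := ⇑(hH.eigenvectorBasis i)) ⟨?_, ?_⟩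
      · rw [Module.End.mem_eigenspace_iff, Matrix.toLin'_apply]
        exact hH.mulVec_eigenvectorBasis i
      · intro h0
        have := hH.eigenvectorBasis.orthonormal.ne_zero i
        apply this
        ext k
        exact congrFun h0 k
    obtain ⟨k, hk⟩ := eigenvalue_mem_ball hev
    rw [hdiag, mem_closedBall_zero_iff] at hk
    refine hk.trans (le_trans ?_ (hrow k))
    exact Finset.sum_le_sum_of_subset_of_nonneg (Finset.erase_subset _ _) (fun _ _ _ => abs_nonneg _)

/-- The trailing projector. -/
theorem aux_proj {n m : ℕ} (hmn : m ≤ n) (U : Matrix (Fin n) (Fin n) ℝ) (hU : Uᵀ * U = 1)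
    (Um : Matrix (Fin n) (Fin m) ℝ)
    (hUm : ∀ i (j : Fin m), Um i j = U i ⟨(j : ℕ), by have := j.isLt; omega⟩) :
    1 - Um * Umᵀ = U * Matrix.diagonal (fun i : Fin n => if m ≤ (i:ℕ) then (1:ℝ) else 0) * Uᵀ := by
  have hU' : U * Uᵀ = 1 := mul_eq_one_comm.1 hU
  rw [← hU', sub_eq_iff_eq_add]
  ext i k
  rw [Matrix.add_apply, Matrix.mul_apply, Matrix.mul_apply, Matrix.mul_apply]
  simp only [Matrix.mul_diagonal, Matrix.transpose_apply, hUm]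
  have : ∑ x : Fin m, U i ⟨(x:ℕ), by have := x.isLt; omega⟩ * U k ⟨(x:ℕ), by have := x.isLt; omega⟩
      = ∑ x : Fin n, if m ≤ (x:ℕ) then 0 else U i x * U k x := by
    rw [← Finset.sum_subset (Finset.subset_univ (Finset.univ.map (Fin.castLEEmb hmn)))]
    · rw [Finset.sum_map]
      refine Finset.sum_congr rfl fun x _ => ?_
      have := x.isLt
      simp [Fin.castLE]
    · intro x _ hx
      rw [if_pos]
      by_contra h
      apply hx
      simp only [Finset.mem_map, Finset.mem_univ, true_and]
      exact ⟨⟨x, by omega⟩, rfl⟩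
  rw [this, ← Finset.sum_add_distrib]
  refine Finset.sum_congr rfl fun x _ => ?_
  split_ifs <;> simp

/-- Theorem 4.2(i). MINRES bound for the preconditioned JDSVD correction
equation with exact singular subspaces, in the case `τ > (σ_max + σ_max,m+1)/2`. -/
theorem minres_bound_precond_exact_largest {M N m : ℕ} (hN : 2 ≤ N) (hMN : N ≤ M)
    (hm : 1 ≤ m) (hmN : m < N)
    (A : Matrix (Fin M) (Fin N) ℝ)
    (U : Matrix (Fin M) (Fin M) ℝ) (V : Matrix (Fin N) (Fin N) ℝ)
    (hU : Uᵀ * U = 1) (hV : Vᵀ * V = 1)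
    (σ : Fin N → ℝ) (hσ : ∀ i, 0 ≤ σ i)
    (S : Matrix (Fin M) (Fin N) ℝ)
    (hS : ∀ i j, S i j = if (i : ℕ) = (j : ℕ) then σ j else 0)
    (hA : A = U * S * Vᵀ)
    (τ : ℝ) (hτ0 : 0 ≤ τ)
    (hclosest : ∀ i j : Fin N, (i : ℕ) < m → m ≤ (j : ℕ) → |σ i - τ| ≤ |σ j - τ|)
    (σmax σmaxm1 : ℝ)
    (hσmax : IsGreatest (Set.range σ) σmax)
    (hσmaxm1 : IsGreatest (σ '' {i : Fin N | m ≤ (i : ℕ)}) σmaxm1)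
    (hτ : (σmax + σmaxm1) / 2 < τ)
    (Um : Matrix (Fin M) (Fin m) ℝ)
    (hUm : ∀ i j, Um i j = U i ⟨(j : ℕ), by have := j.isLt; omega⟩)
    (Vm : Matrix (Fin N) (Fin m) ℝ)
    (hVm : ∀ i j, Vm i j = V i ⟨(j : ℕ), by have := j.isLt; omega⟩)
    (B P Bm : Matrix (Fin M ⊕ Fin N) (Fin M ⊕ Fin N) ℝ)
    (hB : B = Matrix.fromBlocks ((-τ) • 1) A Aᵀ ((-τ) • 1))
    (hP : P = Matrix.fromBlocks (1 - Um * Umᵀ) 0 0 (1 - Vm * Vmᵀ))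
    (hBm : Bm = P * B * P)
    (r : Fin M ⊕ Fin N → ℝ) (hr : P *ᵥ r = r) :
    ∀ j : ℕ, ∃ w ∈ Krylov Bm r j,
      vnorm (Bm *ᵥ w + r) ≤
        2 * (1 - 2 / (1 + Real.sqrt ((τ + σmaxm1) / (τ - σmaxm1)))) ^ j * vnorm r := by
  intro j
  obtain ⟨⟨i0, hi0, hi0s⟩, hub⟩ := hσmaxm1
  have hs0 : 0 ≤ σmaxm1 := hi0s ▸ hσ i0
  have hsm : σmaxm1 ≤ σmax := hi0s ▸ hσmax.2 ⟨i0, rfl⟩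
  have hst : σmaxm1 < τ := by linarith
  obtain ⟨p, hpd, hp0, hpb⟩ := aux_poly σmaxm1 τ hs0 hst j
  obtain ⟨w, hw, hwe⟩ := aux_krylov Bm r j p hpd hp0
  refine ⟨w, hw, ?_⟩
  rw [hwe]
  have hUU : U * Uᵀ = 1 := mul_eq_one_comm.1 hU
  have hVV : V * Vᵀ = 1 := mul_eq_one_comm.1 hV
  have hPu := aux_proj (by omega) U hU Um hUm
  have hPv := aux_proj (by omega) V hV Vm hVm
  set du : Fin M → ℝ := fun i => if m ≤ (i:ℕ) then (1:ℝ) else 0 with hdu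
  set dv : Fin N → ℝ := fun i => if m ≤ (i:ℕ) then (1:ℝ) else 0 with hdv
  set T : Matrix (Fin M) (Fin N) ℝ := Matrix.diagonal du * S * Matrix.diagonal dv with hT
  have hTe : ∀ i k, T i k = if (i:ℕ) = (k:ℕ) ∧ m ≤ (k:ℕ) then σ k else 0 := by
    intro i k
    rw [hT, Matrix.mul_diagonal, Matrix.diagonal_mul, hS, hdu, hdv]
    by_cases h1 : (i:ℕ) = (k:ℕ) <;> by_cases h2 : m ≤ (k:ℕ) <;> simp [h1, h2]
  set W : Matrix (Fin M ⊕ Fin N) (Fin M ⊕ Fin N) ℝ := Matrix.fromBlocks U 0 0 V with hW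
  have hWW : Wᵀ * W = 1 := by
    rw [hW, Matrix.fromBlocks_transpose, Matrix.fromBlocks_multiply]
    simp [hU, hV]
  have hWW' : W * Wᵀ = 1 := mul_eq_one_comm.1 hWW
  set E : Matrix (Fin M ⊕ Fin N) (Fin M ⊕ Fin N) ℝ := Matrix.diagonal (Sum.elim du dv) with hE
  have hPe : P = W * E * Wᵀ := by
    rw [hP, hPu, hPv, hW, hE, ← Matrix.fromBlocks_diagonal, Matrix.fromBlocks_transpose,
      Matrix.fromBlocks_multiply, Matrix.fromBlocks_multiply]
    simp
  set K : Matrix (Fin M ⊕ Fin N) (Fin M ⊕ Fin N) ℝ := Matrix.fromBlocks 0 T Tᵀ 0 with hK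
  have hEE : E * E = E := by
    rw [hE, Matrix.diagonal_mul_diagonal]
    congr 1
    ext i
    rcases i with i | i <;> simp [hdu, hdv]
  have hEK : E * Matrix.fromBlocks 0 S Sᵀ 0 * E = K := by
    rw [hE, ← Matrix.fromBlocks_diagonal, Matrix.fromBlocks_multiply, Matrix.fromBlocks_multiply]
    simp [hK, hT, Matrix.mul_assoc]
  have hBe : B = W * (Matrix.fromBlocks 0 S Sᵀ 0 - τ • 1) * Wᵀ := by
    rw [Matrix.mul_sub, Matrix.sub_mul, Matrix.mul_smul, Matrix.smul_mul, Matrix.mul_one, hWW',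
      hW, Matrix.fromBlocks_transpose,
      Matrix.fromBlocks_multiply, Matrix.fromBlocks_multiply, hB, hA, ← Matrix.fromBlocks_one,
      Matrix.fromBlocks_smul, sub_eq_add_neg, Matrix.fromBlocks_neg, Matrix.fromBlocks_add]
    simp [Matrix.transpose_mul, Matrix.mul_assoc]
  have hcancel : ∀ X Y : Matrix (Fin M ⊕ Fin N) (Fin M ⊕ Fin N) ℝ,
      (W * X * Wᵀ) * (W * Y * Wᵀ) = W * (X * Y) * Wᵀ := by
    intro X Y
    calc _ = W * X * (Wᵀ * W) * Y * Wᵀ := by simp only [Matrix.mul_assoc]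
      _ = _ := by rw [hWW]; simp only [Matrix.mul_assoc, Matrix.one_mul]
  have hBme : Bm = W * K * Wᵀ - τ • P := by
    rw [hBm, hBe, hPe, hcancel, hcancel, Matrix.mul_sub, Matrix.sub_mul, hEK]
    simp [Matrix.mul_sub, Matrix.sub_mul, hEE]
  have hPK : P * (W * K * Wᵀ) = W * K * Wᵀ := by
    have hEK2 : E * K = K := by
      rw [← hEK, ← Matrix.mul_assoc E, ← Matrix.mul_assoc E, hEE]
    rw [hPe, hcancel, hEK2]
  obtain ⟨Q, d, hQ, hKQ, hd⟩ := aux_diag K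
    (by rw [hK, Matrix.fromBlocks_transpose]; simp) σmaxm1
    (by rintro (i | i) <;> simp [hK]) (by
      have hσk : ∀ k : Fin N, m ≤ (k:ℕ) → |σ k| ≤ σmaxm1 := fun k hk => by
        rw [abs_of_nonneg (hσ k)]; exact hub ⟨k, hk, rfl⟩
      rintro (i | i)
      · rw [Fintype.sum_sum_type]
        simp only [hK, Matrix.fromBlocks_apply₁₁, Matrix.fromBlocks_apply₁₂, Matrix.zero_apply,
          abs_zero, Finset.sum_const_zero, zero_add, hTe]
        by_cases hi : (i:ℕ) < N
        · rw [Finset.sum_eq_single (⟨i, hi⟩ : Fin N)]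
          · split_ifs with h
            · exact hσk _ h.2
            · simpa using hs0
          · intro b _ hb
            rw [if_neg, abs_zero]
            rintro ⟨h, -⟩
            exact hb (Fin.ext h.symm)
          · simp
        · rw [Finset.sum_eq_zero]
          · exact hs0
          · intro b _
            rw [if_neg, abs_zero]
            rintro ⟨h, -⟩
            have := b.isLt
            omega
      · rw [Fintype.sum_sum_type]
        simp only [hK, Matrix.fromBlocks_apply₂₁, Matrix.fromBlocks_apply₂₂, Matrix.zero_apply,
          abs_zero, Finset.sum_const_zero, add_zero, hTe, Matrix.transpose_apply]
        have hi := i.isLt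
        rw [Finset.sum_eq_single (⟨i, by omega⟩ : Fin M)]
        · split_ifs with h
          · exact hσk _ h.2
          · simpa using hs0
        · intro b _ hb
          rw [if_neg, abs_zero]
          rintro ⟨h, -⟩
          exact hb (Fin.ext h)
        · simp)
  have hWQ : (W * Q)ᵀ * (W * Q) = 1 := by
    rw [Matrix.transpose_mul]
    calc _ = Qᵀ * (Wᵀ * W) * Q := by simp only [Matrix.mul_assoc]
      _ = 1 := by rw [hWW, Matrix.mul_one, hQ]
  have hWQ' : (W * Q) * (W * Q)ᵀ = 1 := mul_eq_one_comm.1 hWQ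
  have hC : W * K * Wᵀ - τ • 1 = (W * Q) * Matrix.diagonal (fun i => d i - τ) * (W * Q)ᵀ := by
    have : Matrix.diagonal (fun i => d i - τ) = Matrix.diagonal d - τ • 1 := by
      ext i k
      by_cases h : i = k
      · subst h; simp
      · simp [h]
    rw [this, Matrix.mul_sub, Matrix.sub_mul, Matrix.mul_smul, Matrix.smul_mul, Matrix.mul_one, hWQ',
      hKQ, Matrix.transpose_mul]
    simp only [Matrix.mul_assoc]
  rw [aux_aeval_mulVec_congr Bm (W * K * Wᵀ - τ • 1) P r hr ?_ ?_ p, hC]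
  · refine aux_bound (W * Q) hWQ _ p _ (fun i => hpb _ (hd i)) ?_ r
    exact (abs_nonneg _).trans (hpb 0 (by simpa using hs0))
  · intro v hv
    rw [hBme, Matrix.sub_mulVec, Matrix.sub_mulVec, Matrix.smul_mulVec, Matrix.smul_mulVec, hv,
      Matrix.one_mulVec]
  · intro v hv
    rw [Matrix.sub_mulVec, Matrix.smul_mulVec, Matrix.one_mulVec, Matrix.mulVec_sub,
      Matrix.mulVec_mulVec, hPK, Matrix.mulVec_smul, hv]
end

section
/- Assume 0 < τ, σ_min ≤ τ < (σ_min + σ_min,m+1)/2, and let r ∈ ℝ^{M+N} satisfy Π_m r = r. Set j₀ = min{1, M−N}. Then for every j ≥ j₀ there exists w ∈ K_j(B_m, r) such that ‖B_m w + r‖ ≤ 2 · (σ_max/τ)^{j₀} · (1 − 2/(1 + √((σ_max² − τ²)/(σ_min,m+1² − τ²))))^{⌊(j−j₀)/2⌋} · ‖r‖, where ⌊·⌋ denotes the integer part. -/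
open Matrix

lemma cheb_T_val (s : ℝ) (hs : s ≠ 0) (k : ℕ) :
    (Polynomial.Chebyshev.T ℝ k).eval ((s + s⁻¹)/2) = (s^k + (s⁻¹)^k)/2 := by
  induction k using Nat.twoStepInduction with
  | zero => simp
  | one => simp
  | more n h1 h2 =>
    have h := Polynomial.Chebyshev.T_add_two ℝ (n:ℤ)
    have e : ((n+2 : ℕ):ℤ) = (n:ℤ)+2 := by push_cast; ring
    have e1 : ((n+1 : ℕ):ℤ) = (n:ℤ)+1 := by push_cast; ring
    rw [e1] at h2
    rw [e, h]
    simp only [Polynomial.eval_sub, Polynomial.eval_mul, Polynomial.eval_X, Polynomial.eval_ofNat, h1, h2]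
    have : s * s⁻¹ = 1 := mul_inv_cancel₀ hs
    generalize s⁻¹ = u at *
    linear_combination (s^n + u^n)/2 * this

lemma cheb_poly (a b t : ℝ) (ht : t < a) (hab : a ≤ b) (k : ℕ) :
    ∃ g : Polynomial ℝ, g.natDegree ≤ k ∧ g.eval t = 1 ∧
      ∀ x, a ≤ x → x ≤ b → |g.eval x| ≤ 2 * (1 - 2 / (1 + Real.sqrt ((b - t) / (a - t)))) ^ k := by
  set q := Real.sqrt ((b - t) / (a - t)) with hq
  have hat : 0 < a - t := by linarith
  have hq2 : q ^ 2 * (a - t) = b - t := by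
    rw [hq, Real.sq_sqrt (by apply div_nonneg <;> linarith)]; field_simp
  have hq0 : 0 ≤ q := Real.sqrt_nonneg _
  have hq1 : 1 ≤ q := by
    rw [hq, Real.one_le_sqrt, le_div_iff₀ hat]; linarith
  rcases eq_or_lt_of_le hab with h | h
  · subst h
    refine ⟨(Polynomial.C ((a - t)⁻¹) * (Polynomial.C a - Polynomial.X)) ^ k, ?_, ?_, ?_⟩
    · refine Polynomial.natDegree_pow_le.trans ?_
      have : (Polynomial.C ((a - t)⁻¹) * (Polynomial.C a - Polynomial.X)).natDegree ≤ 1 := by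
        compute_degree
      nlinarith
    · simp [hat.ne']
    · intro x h1 h2
      have : x = a := le_antisymm h2 h1
      have hq' : q = 1 := by rw [hq, div_self hat.ne', Real.sqrt_one]
      rw [hq', this]
      rcases Nat.eq_zero_or_pos k with h0 | h0
      · subst h0; simp
      · norm_num [h0.ne']
  · have hq1' : 1 < q := by
      rcases eq_or_lt_of_le hq1 with h' | h'
      · rw [← h'] at hq2; linarith
      · exact h'
    have hba : 0 < b - a := by linarith
    set s := (q+1)/(q-1) with hs
    have hs0 : 0 < s := by apply div_pos <;> linarith
    have hv : (s + s⁻¹)/2 = (b + a - 2*t)/(b-a) := by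
      have h3 : q - 1 ≠ 0 := by linarith
      have h4 : q + 1 ≠ 0 := by linarith
      rw [hs, inv_div, eq_div_iff hba.ne']
      have e1 : b - a = (q^2-1)*(a-t) := by linarith
      have e2 : b + a - 2*t = (q^2+1)*(a-t) := by linarith
      rw [e1, e2]; field_simp; ring
    have hr : 1 - 2/(1+q) = s⁻¹ := by
      have h4 : 1 + q ≠ 0 := by linarith
      have h5 : q + 1 ≠ 0 := by linarith
      rw [hs, inv_div]; field_simp; ring
    set L : Polynomial ℝ := Polynomial.C ((b-a)⁻¹) * (Polynomial.C (b+a) - 2 * Polynomial.X) with hL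
    have hT := cheb_T_val s hs0.ne' k
    have hLt : L.eval t = (s + s⁻¹)/2 := by
      rw [hv]; simp [hL]; ring
    set c := (s^k + (s⁻¹)^k)/2 with hc
    have hspos : 0 < s^k := by positivity
    have hspos' : 0 < (s⁻¹)^k := by positivity
    have hcpos : 0 < c := by positivity
    refine ⟨Polynomial.C c⁻¹ * (Polynomial.Chebyshev.T ℝ k).comp L, ?_, ?_, ?_⟩
    · refine (Polynomial.natDegree_C_mul_le _ _).trans ?_
      refine Polynomial.natDegree_comp_le.trans ?_
      have hL1 : L.natDegree ≤ 1 := by rw [hL]; compute_degree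
      have : (Polynomial.Chebyshev.T ℝ (k:ℤ)).natDegree = k := by
        simp
      rw [this]; nlinarith
    · rw [Polynomial.eval_mul, Polynomial.eval_comp, hLt, hT]; simp [hcpos.ne']
    · intro x h1 h2
      rw [Polynomial.eval_mul, Polynomial.eval_comp, hr, Polynomial.eval_C, abs_mul, abs_of_pos (inv_pos.2 hcpos)]
      have hx : |L.eval x| ≤ 1 := by
        have : L.eval x = (b+a-2*x)/(b-a) := by simp [hL]; ring
        rw [this, abs_le, le_div_iff₀ hba, div_le_iff₀ hba]
        constructor <;> linarith
      have := Polynomial.Chebyshev.abs_eval_T_real_le_one k hx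
      calc c⁻¹ * _ ≤ c⁻¹ * 1 := by gcongr
        _ ≤ 2 * s⁻¹ ^ k := by
          rw [mul_one, inv_le_iff_one_le_mul₀ hcpos, hc]
          have : s^k * s⁻¹^k = 1 := by rw [← mul_pow, mul_inv_cancel₀ hs0.ne', one_pow]
          nlinarith

lemma krylov_poly {ι : Type*} [Fintype ι] [DecidableEq ι] (B : Matrix ι ι ℝ) (r : ι → ℝ) (j : ℕ)
    (p : Polynomial ℝ) (hp : p.natDegree ≤ j) (h0 : p.eval 0 = 1) :
    ∃ w ∈ Krylov B r j, B *ᵥ w + r = (Polynomial.aeval B p) *ᵥ r := by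
  refine ⟨∑ i ∈ Finset.range j, p.coeff (i+1) • ((B ^ i) *ᵥ r), ?_, ?_⟩
  · refine Submodule.sum_mem _ fun i hi => Submodule.smul_mem _ _ (Submodule.subset_span ?_)
    exact ⟨i, Finset.mem_range.1 hi, rfl⟩
  · rw [Polynomial.aeval_eq_sum_range' (Nat.lt_succ_of_le hp), Finset.sum_range_succ']
    rw [← Polynomial.coeff_zero_eq_eval_zero] at h0
    rw [Matrix.add_mulVec, h0, Matrix.mulVec_sum, Matrix.sum_mulVec]
    simp [Matrix.mulVec_smul, Matrix.smul_mulVec, pow_succ', Matrix.mulVec_mulVec]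

lemma vnorm_orth {ι : Type*} [Fintype ι] [DecidableEq ι] (W : Matrix ι ι ℝ) (hW : Wᵀ * W = 1)
    (x : ι → ℝ) : vnorm (W *ᵥ x) = vnorm x := by
  have h : ∀ y : ι → ℝ, ∑ i, y i ^ 2 = y ⬝ᵥ y := fun y => by simp [dotProduct, sq]
  unfold vnorm
  rw [h, h, Matrix.dotProduct_mulVec, ← Matrix.mulVec_transpose, Matrix.mulVec_mulVec, hW, Matrix.one_mulVec]

lemma aeval_diag {ι : Type*} [Fintype ι] [DecidableEq ι] (d : ι → ℝ) (g : Polynomial ℝ) :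
    Polynomial.aeval (Matrix.diagonal d) g = Matrix.diagonal (fun i => g.eval (d i)) := by
  have h := Polynomial.aeval_algHom_apply (Matrix.diagonalAlgHom (n := ι) (α := ℝ) ℝ) d g
  have h2 : Polynomial.aeval d g = fun i => g.eval (d i) := by
    ext i
    have := Polynomial.aeval_algHom_apply (Pi.evalAlgHom ℝ (fun _ : ι => ℝ) i) d g
    simpa [Polynomial.aeval_def] using this.symm
  rw [h2] at h
  simpa using h

lemma core {ι : Type*} [Fintype ι] [DecidableEq ι] (W K P Bm B : Matrix ι ι ℝ) (d e : ι → ℝ)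
    (hW : Wᵀ * W = 1) (he : ∀ i, e i = 0 ∨ e i = 1)
    (hP : P = W * diagonal e * Wᵀ) (τ : ℝ) (hτ : 0 < τ) (hB : B = W * (K - τ • 1) * Wᵀ)
    (hBm : Bm = P * B * P) (hKE : diagonal e * K = K * diagonal e) (hK : K * K = diagonal d)
    (hKT : Kᵀ = K) (r : ι → ℝ) (hr : P *ᵥ r = r) (a c : ℝ) (ha : τ ^ 2 < a) (hac : a ≤ c ^ 2)
    (hc : 0 ≤ c)
    (j0 : ℕ) (hj0 : j0 = 0 ∨ j0 = 1)
    (hd : ∀ i, e i ≠ 0 → (j0 = 1 ∧ d i = 0) ∨ (a ≤ d i ∧ d i ≤ c ^ 2)) (j : ℕ) (hj : j0 ≤ j) :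
    ∃ w ∈ Krylov Bm r j,
      vnorm (Bm *ᵥ w + r) ≤
        2 * (c / τ) ^ j0 *
          (1 - 2 / (1 + Real.sqrt ((c ^ 2 - τ ^ 2) / (a - τ ^ 2)))) ^ ((j - j0) / 2) * vnorm r := by
  have hW' : W * Wᵀ = 1 := mul_eq_one_comm.1 hW
  have hEE : diagonal e * diagonal e = diagonal e := by
    rw [diagonal_mul_diagonal]; congr 1; ext i; rcases he i with h | h <;> simp [h]
  set x := Wᵀ *ᵥ r with hx
  have hrx : r = W *ᵥ x := by rw [hx, mulVec_mulVec, hW', one_mulVec]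
  have hEx : diagonal e *ᵥ x = x := by
    have : Wᵀ *ᵥ (P *ᵥ r) = x := by rw [hr]
    rw [hP, mulVec_mulVec, ← Matrix.mul_assoc, ← Matrix.mul_assoc, hW, Matrix.one_mul,
      ← mulVec_mulVec] at this
    exact this
  obtain ⟨g, hg1, hg2, hg3⟩ := cheb_poly a (c^2) (τ^2) ha hac ((j - j0)/2)
  set ρ := (1 - 2 / (1 + Real.sqrt ((c ^ 2 - τ ^ 2) / (a - τ ^ 2)))) ^ ((j - j0) / 2) with hρ
  have hρ0 : 0 ≤ 2 * ρ := (abs_nonneg _).trans (hg3 a le_rfl hac)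
  set p : Polynomial ℝ := (1 + Polynomial.C τ⁻¹ * Polynomial.X) ^ j0 *
    g.comp ((Polynomial.X + Polynomial.C τ) ^ 2) with hp
  have hpd : p.natDegree ≤ j := by
    have h1 : (1 + Polynomial.C τ⁻¹ * Polynomial.X : Polynomial ℝ).natDegree ≤ 1 := by compute_degree
    have h2 : ((Polynomial.X + Polynomial.C τ) ^ 2 : Polynomial ℝ).natDegree ≤ 2 := by compute_degree
    have h3 := Polynomial.natDegree_pow_le_of_le j0 h1
    have h4 : (g.comp ((Polynomial.X + Polynomial.C τ) ^ 2)).natDegree ≤ (j - j0)/2*2 :=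
      Polynomial.natDegree_comp_le.trans (Nat.mul_le_mul hg1 h2)
    have h5 := Polynomial.natDegree_mul_le_of_le h3 h4
    refine h5.trans ?_
    omega
  have hp0 : p.eval 0 = 1 := by simp [hp, Polynomial.eval_comp, hg2]
  obtain ⟨w, hw, hw2⟩ := krylov_poly Bm r j p hpd hp0
  refine ⟨w, hw, ?_⟩
  set H := K - τ • (1 : Matrix ι ι ℝ) with hH
  have hHE : diagonal e * H = H * diagonal e := by
    rw [hH, Matrix.mul_sub, Matrix.sub_mul, hKE]; simp
  have hBW : Bm * W = W * (H * diagonal e) := by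
    rw [hBm, hP, hB]
    calc _ = W * diagonal e * (Wᵀ * W) * H * (Wᵀ * W) * diagonal e * (Wᵀ * W) := by
          simp only [Matrix.mul_assoc]
      _ = _ := by
          simp only [hW, Matrix.mul_one, Matrix.mul_assoc]
          rw [← Matrix.mul_assoc (diagonal e), hHE, Matrix.mul_assoc, hEE]
  have hpow : ∀ n : ℕ, (Bm ^ n) *ᵥ r = W *ᵥ (H ^ n *ᵥ x) ∧ diagonal e *ᵥ (H ^ n *ᵥ x) = H ^ n *ᵥ x := by
    intro n
    induction n with
    | zero => simp [hEx, ← hrx]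
    | succ n ih =>
      obtain ⟨i1, i2⟩ := ih
      constructor
      · rw [pow_succ', ← mulVec_mulVec, i1, mulVec_mulVec, hBW, ← mulVec_mulVec, ← mulVec_mulVec, i2,
          pow_succ', ← mulVec_mulVec]
      · rw [pow_succ', ← mulVec_mulVec, mulVec_mulVec, hHE, ← mulVec_mulVec, i2]
  have hpoly : (Polynomial.aeval Bm p) *ᵥ r = W *ᵥ ((Polynomial.aeval H p) *ᵥ x) := by
    rw [Polynomial.aeval_eq_sum_range, Polynomial.aeval_eq_sum_range, Matrix.sum_mulVec,
      Matrix.sum_mulVec, Matrix.mulVec_sum]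
    refine Finset.sum_congr rfl fun i _ => ?_
    rw [smul_mulVec, smul_mulVec, mulVec_smul, (hpow i).1]
  have hHp : Polynomial.aeval H p = (τ⁻¹ • K) ^ j0 * diagonal (fun i => g.eval (d i)) := by
    rw [hp, map_mul, map_pow, Polynomial.aeval_comp]
    have e1 : Polynomial.aeval H (1 + Polynomial.C τ⁻¹ * Polynomial.X) = τ⁻¹ • K := by
      simp only [map_add, map_mul, Polynomial.aeval_C, Polynomial.aeval_X, map_one]
      rw [← Algebra.smul_def, hH, smul_sub, smul_smul, inv_mul_cancel₀ hτ.ne']; simp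
    have e2 : Polynomial.aeval H ((Polynomial.X + Polynomial.C τ) ^ 2) = diagonal d := by
      simp only [map_add, map_pow, Polynomial.aeval_C, Polynomial.aeval_X]
      rw [Algebra.algebraMap_eq_smul_one, hH, sub_add_cancel, sq, hK]
    rw [e1, e2, aeval_diag]
  rw [hw2, hpoly, vnorm_orth W hW, hHp, hrx, vnorm_orth W hW]
  have hxi : ∀ i, e i = 0 → x i = 0 := by
    intro i hi
    rw [← hEx, mulVec_diagonal, hi, zero_mul]
  have hsq : ∀ y : ι → ℝ, ∑ i, y i ^ 2 = y ⬝ᵥ y := fun y => by simp [dotProduct, sq]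
  have hgoal : ∀ (y : ι → ℝ) (D : ℝ), 0 ≤ D → (∑ i, y i ^ 2 ≤ D ^ 2 * ∑ i, x i ^ 2) →
      vnorm y ≤ D * vnorm x := by
    intro y D hD h
    unfold vnorm
    refine (Real.sqrt_le_sqrt h).trans ?_
    rw [Real.sqrt_mul (sq_nonneg D), Real.sqrt_sq hD]
  have hg4 : ∀ y, a ≤ y → y ≤ c^2 → (g.eval y)^2 ≤ (2*ρ)^2 := fun y h1 h2 => by
    rw [← sq_abs]; exact pow_le_pow_left₀ (abs_nonneg _) (hg3 y h1 h2) 2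
  rcases hj0 with h0 | h0
  · rw [h0]
    simp only [pow_zero, Matrix.one_mul, mul_one]
    apply hgoal _ _ hρ0
    rw [Finset.mul_sum]
    refine Finset.sum_le_sum fun i _ => ?_
    rw [mulVec_diagonal, mul_pow]
    by_cases hi : e i = 0
    · rw [hxi i hi]; simp
    · rcases hd i hi with h | h
      · omega
      · exact mul_le_mul_of_nonneg_right (hg4 _ h.1 h.2) (sq_nonneg _)
  · rw [h0]
    simp only [pow_one]
    apply hgoal _ _ (by have : 0 ≤ c / τ := by positivity
                        nlinarith)
    rw [← mulVec_mulVec, smul_mulVec]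
    set z := diagonal (fun i => g.eval (d i)) *ᵥ x with hz
    have hKz : ∑ i, (τ⁻¹ • (K *ᵥ z)) i ^ 2 = τ⁻¹^2 * ∑ i, d i * z i ^ 2 := by
      have : ∑ i, d i * z i ^ 2 = z ⬝ᵥ (diagonal d *ᵥ z) := by
        simp only [dotProduct, mulVec_diagonal]
        exact Finset.sum_congr rfl fun i _ => by ring
      rw [this, ← hK, ← mulVec_mulVec, dotProduct_mulVec, ← mulVec_transpose, hKT, ← hsq,
        Finset.mul_sum]
      exact Finset.sum_congr rfl fun i _ => by simp [mul_pow]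
    rw [hKz, Finset.mul_sum, Finset.mul_sum]
    refine Finset.sum_le_sum fun i _ => ?_
    rw [hz, mulVec_diagonal, mul_pow]
    by_cases hi : e i = 0
    · rw [hxi i hi]; simp
    · rcases hd i hi with h | h
      · rw [h.2]; simp only [zero_mul, mul_zero]; positivity
      · have h1 := hg4 _ h.1 h.2
        have h2 : d i * (g.eval (d i))^2 ≤ c^2 * (2*ρ)^2 := by
          apply mul_le_mul h.2 h1 (sq_nonneg _) (sq_nonneg _)
        calc _ = (d i * (g.eval (d i))^2) * (τ⁻¹^2 * x i ^ 2) := by ring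
          _ ≤ (c^2 * (2*ρ)^2) * (τ⁻¹^2 * x i ^ 2) := by gcongr
          _ = _ := by ring

lemma proj_eq {M m : ℕ} (hm : m ≤ M) (U : Matrix (Fin M) (Fin M) ℝ) (hU : Uᵀ * U = 1)
    (Um : Matrix (Fin M) (Fin m) ℝ)
    (hUm : ∀ i j, Um i j = U i ⟨(j : ℕ), by have := j.isLt; omega⟩) :
    1 - Um * Umᵀ = U * diagonal (fun i : Fin M => if (i : ℕ) < m then (0:ℝ) else 1) * Uᵀ := by
  have hU' : U * Uᵀ = 1 := mul_eq_one_comm.1 hU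
  have h1 : Um * Umᵀ = U * diagonal (fun i : Fin M => if (i : ℕ) < m then (1:ℝ) else 0) * Uᵀ := by
    ext i k
    rw [Matrix.mul_apply, Matrix.mul_apply]
    simp only [Matrix.mul_diagonal, Matrix.transpose_apply, hUm, mul_ite, mul_one, mul_zero,
      ite_mul, zero_mul]
    rw [← Finset.sum_filter]
    refine Finset.sum_bij (fun (j : Fin m) _ => (⟨(j:ℕ), by have := j.isLt; omega⟩ : Fin M)) ?_ ?_ ?_ ?_
    · intro j _; simp
    · intro j _ j' _ h; simpa [Fin.ext_iff] using h
    · intro j hj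
      simp only [Finset.mem_filter, Finset.mem_univ, true_and] at hj
      exact ⟨⟨j, hj⟩, Finset.mem_univ _, rfl⟩
    · intro j _; rfl
  rw [h1]
  have h2 : (diagonal (fun i : Fin M => if (i : ℕ) < m then (0:ℝ) else 1)) =
      1 - diagonal (fun i : Fin M => if (i : ℕ) < m then (1:ℝ) else 0) := by
    rw [← diagonal_one, diagonal_sub]
    congr 1; ext i; split_ifs <;> simp
  rw [h2, Matrix.mul_sub, Matrix.sub_mul, Matrix.mul_one, hU']


/-- Theorem 4.2(ii). MINRES bound for the preconditioned JDSVD correction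
equation with exact singular subspaces, in the case `σ_min ≤ τ < (σ_min + σ_min,m+1)/2`. -/
theorem minres_bound_precond_exact_smallest {M N m : ℕ} (hN : 2 ≤ N) (hMN : N ≤ M)
    (hm : 1 ≤ m) (hmN : m < N)
    (A : Matrix (Fin M) (Fin N) ℝ)
    (U : Matrix (Fin M) (Fin M) ℝ) (V : Matrix (Fin N) (Fin N) ℝ)
    (hU : Uᵀ * U = 1) (hV : Vᵀ * V = 1)
    (σ : Fin N → ℝ) (hσ : ∀ i, 0 ≤ σ i)
    (S : Matrix (Fin M) (Fin N) ℝ)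
    (hS : ∀ i j, S i j = if (i : ℕ) = (j : ℕ) then σ j else 0)
    (hA : A = U * S * Vᵀ)
    (τ : ℝ) (hτ0 : 0 < τ)
    (hclosest : ∀ i j : Fin N, (i : ℕ) < m → m ≤ (j : ℕ) → |σ i - τ| ≤ |σ j - τ|)
    (σmax σmin σminm1 : ℝ)
    (hσmax : IsGreatest (Set.range σ) σmax)
    (hσmin : IsLeast (Set.range σ) σmin)
    (hσminm1 : IsLeast (σ '' {i : Fin N | m ≤ (i : ℕ)}) σminm1)
    (hτ1 : σmin ≤ τ) (hτ2 : τ < (σmin + σminm1) / 2)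
    (Um : Matrix (Fin M) (Fin m) ℝ)
    (hUm : ∀ i j, Um i j = U i ⟨(j : ℕ), by have := j.isLt; omega⟩)
    (Vm : Matrix (Fin N) (Fin m) ℝ)
    (hVm : ∀ i j, Vm i j = V i ⟨(j : ℕ), by have := j.isLt; omega⟩)
    (B P Bm : Matrix (Fin M ⊕ Fin N) (Fin M ⊕ Fin N) ℝ)
    (hB : B = Matrix.fromBlocks ((-τ) • 1) A Aᵀ ((-τ) • 1))
    (hP : P = Matrix.fromBlocks (1 - Um * Umᵀ) 0 0 (1 - Vm * Vmᵀ))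
    (hBm : Bm = P * B * P)
    (r : Fin M ⊕ Fin N → ℝ) (hr : P *ᵥ r = r) :
    ∀ j : ℕ, min 1 (M - N) ≤ j → ∃ w ∈ Krylov Bm r j,
      vnorm (Bm *ᵥ w + r) ≤
        2 * (σmax / τ) ^ (min 1 (M - N)) *
          (1 - 2 / (1 + Real.sqrt ((σmax ^ 2 - τ ^ 2) / (σminm1 ^ 2 - τ ^ 2)))) ^
            ((j - min 1 (M - N)) / 2) * vnorm r := by
  have hmid : σmin + σminm1 > 2 * τ := by linarith
  have hτm : τ < σminm1 := by linarith
  have hσle : ∀ i, σ i ≤ σmax := fun i => hσmax.2 ⟨i, rfl⟩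
  have hσge : ∀ i : Fin N, m ≤ (i:ℕ) → σminm1 ≤ σ i := fun i hi => hσminm1.2 ⟨i, hi, rfl⟩
  have hmM : σminm1 ≤ σmax := by
    obtain ⟨i, _, hi⟩ := hσminm1.1
    rw [← hi]; exact hσle i
  intro j hj
  let dM : Fin M → ℝ := fun i => if h : (i:ℕ) < N then σ ⟨i, h⟩ ^ 2 else 0
  let dN : Fin N → ℝ := fun i => σ i ^ 2
  let eM : Fin M → ℝ := fun i => if (i : ℕ) < m then (0:ℝ) else 1
  let eN : Fin N → ℝ := fun i => if (i : ℕ) < m then (0:ℝ) else 1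
  have hSS : S * Sᵀ = diagonal dM := by
    ext i k
    rw [Matrix.mul_apply, diagonal_apply]
    simp only [transpose_apply, hS]
    by_cases h : (i:ℕ) < N
    · rw [Finset.sum_eq_single (⟨i, h⟩ : Fin N)]
      · by_cases hik : i = k
        · subst hik; simp [dM, h, sq]
        · have : ¬ (k:ℕ) = i := fun h' => hik (Fin.ext h'.symm)
          simp [hik, this]
      · intro b _ hb
        have : ¬ (i:ℕ) = b := fun h' => hb (Fin.ext h'.symm)
        simp [this]
      · simp
    · rw [Finset.sum_eq_zero]
      · simp [dM, h]
      · intro b _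
        have : ¬ (i:ℕ) = b := by have := b.isLt; omega
        simp [this]
  have hSS' : Sᵀ * S = diagonal dN := by
    ext i k
    rw [Matrix.mul_apply, diagonal_apply]
    simp only [transpose_apply, hS]
    rw [Finset.sum_eq_single (⟨i, by have := i.isLt; omega⟩ : Fin M)]
    · by_cases hik : i = k
      · subst hik; simp [dN, sq]
      · have : ¬ (i:ℕ) = k := fun h' => hik (Fin.ext h')
        simp [hik, this]
    · intro b _ hb
      have : ¬ (b:ℕ) = i := fun h' => hb (Fin.ext h')
      simp [this]
    · simp
  have hES : diagonal eM * S = S * diagonal eN := by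
    ext i k
    rw [diagonal_mul, mul_diagonal, hS]
    by_cases h : (i:ℕ) = k
    · simp [eM, eN, h, mul_comm]
    · simp [h]
  have hES' : diagonal eN * Sᵀ = Sᵀ * diagonal eM := by
    have := congrArg transpose hES
    rw [transpose_mul, transpose_mul, diagonal_transpose, diagonal_transpose] at this
    exact this.symm
  have hU' : U * Uᵀ = 1 := mul_eq_one_comm.1 hU
  have hV' : V * Vᵀ = 1 := mul_eq_one_comm.1 hV
  have hσmax0 : 0 ≤ σmax := by linarith
  refine core (fromBlocks U 0 0 V) (fromBlocks 0 S Sᵀ 0) P Bm B (Sum.elim dM dN) (Sum.elim eM eN)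
    ?_ ?_ ?_ τ hτ0 ?_ hBm ?_ ?_ ?_ r hr (σminm1 ^ 2) σmax (by nlinarith) (by nlinarith) hσmax0
    (min 1 (M - N)) (by omega) ?_ j hj
  · simp [fromBlocks_transpose, fromBlocks_multiply, hU, hV]
  · rintro (i | i)
    · simp only [Sum.elim_inl, eM]; split_ifs <;> simp
    · simp only [Sum.elim_inr, eN]; split_ifs <;> simp
  · rw [hP, proj_eq (by omega) U hU Um hUm, proj_eq (by omega) V hV Vm hVm, ← fromBlocks_diagonal]
    simp [-fromBlocks_diagonal, fromBlocks_transpose, fromBlocks_multiply, eM, eN]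
  · rw [hB, ← fromBlocks_one, fromBlocks_smul, hA]
    simp [fromBlocks_transpose, fromBlocks_multiply, sub_eq_add_neg, fromBlocks_neg, fromBlocks_add,
      transpose_mul, Matrix.mul_assoc, hU', hV']
  · rw [← fromBlocks_diagonal]
    simp [-fromBlocks_diagonal, fromBlocks_multiply, hES, hES']
  · rw [← fromBlocks_diagonal]
    simp [fromBlocks_multiply, hSS, hSS']
  · simp [fromBlocks_transpose]
  · have key : ∀ i : Fin N, m ≤ (i:ℕ) → σminm1 ^ 2 ≤ σ i ^ 2 ∧ σ i ^ 2 ≤ σmax ^ 2 := fun i hi =>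
      ⟨pow_le_pow_left₀ (by linarith) (hσge i hi) 2, pow_le_pow_left₀ (hσ i) (hσle i) 2⟩
    rintro (i | i) hi
    · have him : m ≤ (i:ℕ) := by
        by_contra h
        exact hi (by simp only [Sum.elim_inl, eM]; rw [if_pos (by omega)])
      by_cases h : (i:ℕ) < N
      · right
        have := key ⟨i, h⟩ him
        simpa [dM, h] using this
      · left
        refine ⟨by have := i.isLt; omega, by simp [dM, h]⟩
    · have him : m ≤ (i:ℕ) := by
        by_contra h
        exact hi (by simp only [Sum.elim_inr, eN]; rw [if_pos (by omega)])
      right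
      exact key i him
end

section
/- Let Ũ_m ∈ ℝ^{M×m} and Ṽ_m ∈ ℝ^{N×m} have orthonormal columns, and let P̃_m ∈ ℝ^{M×(M−m)} and Q̃_m ∈ ℝ^{N×(N−m)} be such that [Ũ_m, P̃_m] ∈ ℝ^{M×M} and [Ṽ_m, Q̃_m] ∈ ℝ^{N×N} are orthogonal matrices. Define B̃_m' = [[−τ I_{M−m}, P̃_mᵀ A Q̃_m], [Q̃_mᵀ Aᵀ P̃_m, −τ I_{N−m}]] and B_m' = [[−τ I_{M−m}, Σ_m'], [Σ_m'ᵀ, −τ I_{N−m}]], where Σ_m' ∈ ℝ^{(M−m)×(N−m)} is rectangular diagonal with diagonal entries σ_{m+1}, …, σ_N, and set ‖sin Φ‖ = ‖P̃_mᵀ U_m‖ and ‖sin Ψ‖ = ‖Q̃_mᵀ V_m‖. Then there exists an orthogonal matrix Z ∈ ℝ^{(M+N−2m)×(M+N−2m)} such that ‖B̃_m' − Zᵀ B_m' Z‖ ≤ ‖A‖ · (‖sin Φ‖ + ‖sin Ψ‖)². -/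
open Matrix

open scoped Matrix.Norms.L2Operator

theorem specNorm_eq {ι κ : Type*} [Fintype ι] [Fintype κ] [DecidableEq κ]
    (A : Matrix ι κ ℝ) : specNorm A = ‖A‖ := rfl

theorem aux_norm_transpose {ι κ : Type*} [Fintype ι] [Fintype κ] [DecidableEq κ] [DecidableEq ι]
    (A : Matrix ι κ ℝ) : ‖Aᵀ‖ = ‖A‖ := by
  have := Matrix.l2_opNorm_conjTranspose A
  rwa [Matrix.conjTranspose_eq_transpose_of_trivial] at this

theorem aux_norm_tmul {ι κ : Type*} [Fintype ι] [Fintype κ] [DecidableEq κ]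
    (A : Matrix ι κ ℝ) : ‖Aᵀ * A‖ = ‖A‖ * ‖A‖ := by
  have := Matrix.l2_opNorm_conjTranspose_mul_self A
  rwa [Matrix.conjTranspose_eq_transpose_of_trivial] at this

theorem aux_norm_orth {ι κ : Type*} [Fintype ι] [Fintype κ] [DecidableEq κ]
    (A : Matrix ι κ ℝ) (h : Aᵀ * A = 1) : ‖A‖ ≤ 1 := by
  have h1 := aux_norm_tmul A
  have h2 : ‖(1 : Matrix κ κ ℝ)‖ ≤ 1 := by
    rw [← Matrix.diagonal_one, Matrix.l2_opNorm_diagonal]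
    refine (pi_norm_le_iff_of_nonneg zero_le_one).2 fun i => by simp
  rw [h] at h1
  nlinarith [norm_nonneg A]

theorem aux_norm_mul3 {a b c d : Type*} [Fintype a] [Fintype b] [Fintype c] [Fintype d]
    [DecidableEq b] [DecidableEq c] [DecidableEq d]
    (X : Matrix a b ℝ) (Y : Matrix b c ℝ) (Z : Matrix c d ℝ) {x y z : ℝ}
    (hX : ‖X‖ ≤ x) (hY : ‖Y‖ ≤ y) (hZ : ‖Z‖ ≤ z) : ‖X * Y * Z‖ ≤ x * y * z := by
  have hx := (norm_nonneg X).trans hX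
  have hy := (norm_nonneg Y).trans hY
  calc ‖X * Y * Z‖ ≤ ‖X * Y‖ * ‖Z‖ := Matrix.l2_opNorm_mul _ _
    _ ≤ (‖X‖ * ‖Y‖) * ‖Z‖ := by gcongr; exact Matrix.l2_opNorm_mul _ _
    _ ≤ x * y * z := by gcongr

theorem aux_factor {n : Type*} [Fintype n] [DecidableEq n] (G : Matrix n n ℝ) (d : n → ℝ)
    (hd : ∀ i, 0 ≤ d i) (h : Gᵀ * G = diagonal d) :
    ∃ B : Matrix n n ℝ, Bᵀ * B = 1 ∧ G = B * diagonal (fun i => √(d i)) := by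
  classical
  let g : n → EuclideanSpace ℝ n := fun i => WithLp.toLp 2 (fun k => G k i)
  have hg : ∀ i j, inner ℝ (g i) (g j) = (diagonal d : Matrix n n ℝ) i j := by
    intro i j
    rw [← h]
    simp [g, PiLp.inner_apply, Matrix.mul_apply, mul_comm]
  let v : n → EuclideanSpace ℝ n := fun i => (√(d i))⁻¹ • g i
  let s : Set n := {i | d i ≠ 0}
  have hv : Orthonormal ℝ (s.domRestrict v) := by
    rw [orthonormal_iff_ite]
    rintro ⟨i, hi⟩ ⟨j, hj⟩
    simp only [Set.domRestrict_apply, v, inner_smul_left, inner_smul_right, hg, Subtype.mk.injEq]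
    by_cases hij : i = j
    · subst hij
      have h0 : √(d i) ≠ 0 := by
        rw [Real.sqrt_ne_zero (hd i)]; exact hi
      have := Real.mul_self_sqrt (hd i)
      simp
      field_simp
      nlinarith
    · simp [hij]
  obtain ⟨b, hb⟩ := hv.exists_orthonormalBasis_extension_of_card_eq (by simp)
  refine ⟨Matrix.of fun k i => b i k, ?_, ?_⟩
  · ext i j
    have := orthonormal_iff_ite.1 b.orthonormal i j
    rw [Matrix.one_apply, ← this]
    simp [PiLp.inner_apply, Matrix.mul_apply, mul_comm]
  · ext k i
    rw [Matrix.mul_diagonal]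
    simp only [Matrix.of_apply]
    by_cases hi : d i = 0
    · have h1 : g i = 0 := by
        have := hg i i
        rw [Matrix.diagonal_apply_eq, hi] at this
        exact inner_self_eq_zero.1 this
      have h2 : g i k = 0 := by rw [h1]; rfl
      rw [hi]; simpa using h2
    · have h0 : √(d i) ≠ 0 := by
        rw [Real.sqrt_ne_zero (hd i)]; exact hi
      rw [hb i hi]
      simp [v, g]
      field_simp

theorem aux_polar {n : Type*} [Fintype n] [DecidableEq n] (C : Matrix n n ℝ) :
    ∃ Z : Matrix n n ℝ, Zᵀ * Z = 1 ∧ ‖C - Z‖ ≤ ‖1 - Cᵀ * C‖ := by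
  have hP : (Cᵀ * C).PosSemidef := by
    have := Matrix.posSemidef_conjTranspose_mul_self C
    rwa [Matrix.conjTranspose_eq_transpose_of_trivial] at this
  have hH := hP.isHermitian
  obtain ⟨W, d, hd, hW1, hW2, hC⟩ : ∃ (W : Matrix n n ℝ) (d : n → ℝ), (∀ i, 0 ≤ d i) ∧
      Wᵀ * W = 1 ∧ W * Wᵀ = 1 ∧ Cᵀ * C = W * diagonal d * Wᵀ := by
    refine ⟨hH.eigenvectorUnitary, hH.eigenvalues, hP.eigenvalues_nonneg, ?_, ?_, ?_⟩
    · have := Unitary.coe_star_mul_self hH.eigenvectorUnitary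
      rwa [Matrix.star_eq_conjTranspose, Matrix.conjTranspose_eq_transpose_of_trivial] at this
    · have := Unitary.coe_mul_star_self hH.eigenvectorUnitary
      rwa [Unitary.coe_star, Matrix.star_eq_conjTranspose, Matrix.conjTranspose_eq_transpose_of_trivial] at this
    · have := hH.spectral_theorem
      rw [Unitary.conjStarAlgAut_apply, Matrix.star_eq_conjTranspose,
        Matrix.conjTranspose_eq_transpose_of_trivial] at this
      exact this
  have hG : (C * W)ᵀ * (C * W) = diagonal d := by
    calc (C * W)ᵀ * (C * W) = Wᵀ * (Cᵀ * C) * W := by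
          rw [Matrix.transpose_mul]; simp only [Matrix.mul_assoc]
      _ = (Wᵀ * W) * diagonal d * (Wᵀ * W) := by rw [hC]; simp only [Matrix.mul_assoc]
      _ = diagonal d := by rw [hW1]; simp
  obtain ⟨B, hB, hGB⟩ := aux_factor (C * W) d hd hG
  have hWn := aux_norm_orth W hW1
  have hWtn : ‖Wᵀ‖ ≤ 1 := by rwa [aux_norm_transpose]
  have hBn := aux_norm_orth B hB
  refine ⟨B * Wᵀ, ?_, ?_⟩
  · calc (B * Wᵀ)ᵀ * (B * Wᵀ) = W * (Bᵀ * B) * Wᵀ := by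
          rw [Matrix.transpose_mul, Matrix.transpose_transpose]; simp only [Matrix.mul_assoc]
      _ = 1 := by rw [hB]; simp [hW2]
  · have e1 : C - B * Wᵀ = B * diagonal (fun i => √(d i) - 1) * Wᵀ := by
      have : C = B * diagonal (fun i => √(d i)) * Wᵀ := by
        rw [← hGB, Matrix.mul_assoc, hW2, Matrix.mul_one]
      have h2 : (diagonal (fun i => √(d i) - 1) : Matrix n n ℝ)
          = diagonal (fun i => √(d i)) - 1 := by
        rw [← Matrix.diagonal_one, Matrix.diagonal_sub]
      rw [h2, Matrix.mul_sub, Matrix.sub_mul, ← this, Matrix.mul_one]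
    have e2 : (diagonal (fun i => 1 - d i) : Matrix n n ℝ) = Wᵀ * (1 - Cᵀ * C) * W := by
      rw [hC, Matrix.mul_sub, Matrix.sub_mul, Matrix.mul_one, hW1]
      have : Wᵀ * (W * diagonal d * Wᵀ) * W = (Wᵀ * W) * diagonal d * (Wᵀ * W) := by
        simp only [Matrix.mul_assoc]
      rw [this, hW1, ← Matrix.diagonal_one, Matrix.diagonal_mul_diagonal,
        Matrix.diagonal_mul_diagonal, Matrix.diagonal_sub]
      simp
    have n1 : ‖C - B * Wᵀ‖ ≤ ‖(diagonal (fun i => √(d i) - 1) : Matrix n n ℝ)‖ := by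
      rw [e1]
      have := aux_norm_mul3 _ (diagonal (fun i => √(d i) - 1)) _ hBn le_rfl hWtn
      rwa [one_mul, mul_one] at this
    have n2 : ‖(diagonal (fun i => 1 - d i) : Matrix n n ℝ)‖ ≤ ‖1 - Cᵀ * C‖ := by
      rw [e2]
      simpa using aux_norm_mul3 _ _ _ hWtn le_rfl hWn
    refine n1.trans (le_trans ?_ n2)
    rw [Matrix.l2_opNorm_diagonal, Matrix.l2_opNorm_diagonal]
    refine (pi_norm_le_iff_of_nonneg (norm_nonneg _)).2 fun i => ?_
    refine le_trans ?_ (norm_le_pi_norm (fun i => 1 - d i) i)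
    rw [Real.norm_eq_abs, Real.norm_eq_abs]
    have h3 := Real.mul_self_sqrt (hd i)
    have h4 := Real.sqrt_nonneg (d i)
    have h5 : |1 - d i| = |√(d i) - 1| * (√(d i) + 1) := by
      rw [← abs_of_nonneg (by linarith : 0 ≤ √(d i) + 1), ← abs_mul, abs_sub_comm]
      congr 1
      linarith
    rw [h5]
    nlinarith [abs_nonneg (√(d i) - 1)]

theorem aux_block {a b : Type*} [Fintype a] [Fintype b] [DecidableEq a] [DecidableEq b]
    (X : Matrix a b ℝ) : ‖Matrix.fromBlocks 0 X Xᵀ 0‖ ≤ ‖X‖ := by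
  rw [Matrix.l2_opNorm_def]
  refine ContinuousLinearMap.opNorm_le_bound _ (norm_nonneg _) fun x => ?_
  refine le_of_sq_le_sq ?_ (by positivity)
  let x1 : EuclideanSpace ℝ a := WithLp.toLp 2 (fun i => x (Sum.inl i))
  let x2 : EuclideanSpace ℝ b := WithLp.toLp 2 (fun i => x (Sum.inr i))
  have h1 := Matrix.l2_opNorm_mulVec X x2
  have h2 := Matrix.l2_opNorm_mulVec Xᵀ x1
  rw [aux_norm_transpose] at h2
  have h1' := mul_self_le_mul_self (norm_nonneg _) h1
  have h2' := mul_self_le_mul_self (norm_nonneg _) h2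
  have hx : ‖x‖ ^ 2 = ‖x1‖ ^ 2 + ‖x2‖ ^ 2 := by
    simp [EuclideanSpace.norm_sq_eq, x1, x2]
  refine le_trans (b := ‖(EuclideanSpace.equiv a ℝ).symm (X *ᵥ x2)‖ ^ 2 +
    ‖(EuclideanSpace.equiv b ℝ).symm (Xᵀ *ᵥ x1)‖ ^ 2) (le_of_eq ?_) ?_
  · simp [EuclideanSpace.norm_sq_eq, x1, x2, Matrix.mulVec, dotProduct]
  · rw [mul_pow, hx]
    nlinarith

theorem aux_split {M m : ℕ} (hm : m ≤ M) (U : Matrix (Fin M) (Fin M) ℝ) (hU : Uᵀ * U = 1)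
    (f : Fin m → Fin M) (g : Fin (M - m) → Fin M) (hf : ∀ i, (f i : ℕ) = i)
    (hg : ∀ i, (g i : ℕ) = i + m) :
    U.submatrix id f * (U.submatrix id f)ᵀ + U.submatrix id g * (U.submatrix id g)ᵀ = 1 := by
  have h := mul_eq_one_comm.1 hU
  rw [← h]
  ext i j
  let e : Fin m ⊕ Fin (M - m) ≃ Fin M := finSumFinEquiv.trans (finCongr (by omega))
  have e1 : ∀ i, e (Sum.inl i) = f i := fun i => Fin.ext (by simp [e, hf])
  have e2 : ∀ i, e (Sum.inr i) = g i := fun i => Fin.ext (by simp [e, hg]; omega)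
  simp only [Matrix.add_apply, Matrix.mul_apply, Matrix.transpose_apply, Matrix.submatrix_apply, id]
  rw [← e.sum_comp, Fintype.sum_sum_type]
  simp only [e1, e2]

theorem aux_sub {M N : ℕ} {a b : Type*} (U : Matrix (Fin M) (Fin M) ℝ)
    (V : Matrix (Fin N) (Fin N) ℝ) (hU : Uᵀ * U = 1) (hV : Vᵀ * V = 1)
    (S : Matrix (Fin M) (Fin N) ℝ) (f : a → Fin M) (g : b → Fin N) :
    (U.submatrix id f)ᵀ * (U * S * Vᵀ) * V.submatrix id g = S.submatrix f g := by
  have : Uᵀ * (U * S * Vᵀ) * V = S := by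
    calc _ = (Uᵀ * U) * S * (Vᵀ * V) := by simp only [Matrix.mul_assoc]
      _ = S := by simp [hU, hV]
  conv_rhs => rw [← this]
  rfl

theorem aux_orth {M : ℕ} {a : Type*} [Fintype a] [DecidableEq a] (U : Matrix (Fin M) (Fin M) ℝ)
    (hU : Uᵀ * U = 1) (f : a → Fin M) (hf : Function.Injective f) :
    (U.submatrix id f)ᵀ * U.submatrix id f = 1 := by
  have : (U.submatrix id f)ᵀ * U.submatrix id f = (Uᵀ * U).submatrix f f := rfl
  rw [this, hU, Matrix.submatrix_one _ hf]

theorem aux_C {M : ℕ} {a c : Type*} [Fintype a] [DecidableEq a] [Fintype c] [DecidableEq c]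
    (P : Matrix (Fin M) a ℝ) (hP : Pᵀ * P = 1) (U1 : Matrix (Fin M) c ℝ) (U2 : Matrix (Fin M) a ℝ)
    (h : U1 * U1ᵀ + U2 * U2ᵀ = 1) :
    ∃ Z : Matrix a a ℝ, Zᵀ * Z = 1 ∧ ‖U2ᵀ * P - Z‖ ≤ ‖Pᵀ * U1‖ ^ 2 := by
  obtain ⟨Z, hZ, hn⟩ := aux_polar (U2ᵀ * P)
  refine ⟨Z, hZ, hn.trans (le_of_eq ?_)⟩
  have : 1 - (U2ᵀ * P)ᵀ * (U2ᵀ * P) = ((Pᵀ * U1)ᵀ)ᵀ * (Pᵀ * U1)ᵀ := by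
    have h2 : U2 * U2ᵀ = 1 - U1 * U1ᵀ := eq_sub_of_add_eq' h
    calc _ = 1 - Pᵀ * (U2 * U2ᵀ) * P := by
          simp only [Matrix.transpose_mul, Matrix.transpose_transpose, Matrix.mul_assoc]
      _ = Pᵀ * (U1 * U1ᵀ) * P := by
          rw [h2, Matrix.mul_sub, Matrix.sub_mul, Matrix.mul_one, hP]; abel
      _ = _ := by
          simp only [Matrix.transpose_mul, Matrix.transpose_transpose, Matrix.mul_assoc]
  rw [this, aux_norm_tmul, aux_norm_transpose, sq]

/-- Theorem 4.3. The reduced coefficient matrix `B̃_m'` of the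
preconditioned JDSVD correction equation is orthogonally similar to its exact counterpart
`B_m'` up to an error bounded by `‖A‖ (‖sin Φ‖ + ‖sin Ψ‖)²`. -/
theorem similarity_bound_m {M N m : ℕ} (hN : 2 ≤ N) (hMN : N ≤ M)
    (hm : 1 ≤ m) (hmN : m < N)
    (A : Matrix (Fin M) (Fin N) ℝ)
    (U : Matrix (Fin M) (Fin M) ℝ) (V : Matrix (Fin N) (Fin N) ℝ)
    (hU : Uᵀ * U = 1) (hV : Vᵀ * V = 1)
    (σ : Fin N → ℝ) (hσ : ∀ i, 0 ≤ σ i)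
    (S : Matrix (Fin M) (Fin N) ℝ)
    (hS : ∀ i j, S i j = if (i : ℕ) = (j : ℕ) then σ j else 0)
    (hA : A = U * S * Vᵀ)
    (τ : ℝ) (hτ0 : 0 ≤ τ)
    (Um : Matrix (Fin M) (Fin m) ℝ)
    (hUm : ∀ i j, Um i j = U i ⟨(j : ℕ), by have := j.isLt; omega⟩)
    (Vm : Matrix (Fin N) (Fin m) ℝ)
    (hVm : ∀ i j, Vm i j = V i ⟨(j : ℕ), by have := j.isLt; omega⟩)
    (Ut : Matrix (Fin M) (Fin m) ℝ) (Vt : Matrix (Fin N) (Fin m) ℝ)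
    (hUt : Utᵀ * Ut = 1) (hVt : Vtᵀ * Vt = 1)
    (Pt : Matrix (Fin M) (Fin (M - m)) ℝ)
    (hPt1 : Ptᵀ * Pt = 1) (hPt2 : Ptᵀ * Ut = 0)
    (hPt3 : Ut * Utᵀ + Pt * Ptᵀ = 1)
    (Qt : Matrix (Fin N) (Fin (N - m)) ℝ)
    (hQt1 : Qtᵀ * Qt = 1) (hQt2 : Qtᵀ * Vt = 0)
    (hQt3 : Vt * Vtᵀ + Qt * Qtᵀ = 1)
    (Sm : Matrix (Fin (M - m)) (Fin (N - m)) ℝ)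
    (hSm : ∀ i j, Sm i j =
      if (i : ℕ) = (j : ℕ) then σ ⟨(j : ℕ) + m, by have := j.isLt; omega⟩ else 0)
    (Bmt' Bm' : Matrix (Fin (M - m) ⊕ Fin (N - m)) (Fin (M - m) ⊕ Fin (N - m)) ℝ)
    (hBmt' : Bmt' = Matrix.fromBlocks ((-τ) • 1) (Ptᵀ * A * Qt) (Qtᵀ * Aᵀ * Pt) ((-τ) • 1))
    (hBm' : Bm' = Matrix.fromBlocks ((-τ) • 1) Sm Smᵀ ((-τ) • 1)) :
    ∃ Z : Matrix (Fin (M - m) ⊕ Fin (N - m)) (Fin (M - m) ⊕ Fin (N - m)) ℝ,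
      Zᵀ * Z = 1 ∧
      specNorm (Bmt' - Zᵀ * Bm' * Z) ≤
        specNorm A * (specNorm (Ptᵀ * Um) + specNorm (Qtᵀ * Vm)) ^ 2 := by
  let f : Fin m → Fin M := fun j => ⟨j, by omega⟩
  let g : Fin m → Fin N := fun j => ⟨j, by omega⟩
  let f' : Fin (M - m) → Fin M := fun j => ⟨j + m, by omega⟩
  let g' : Fin (N - m) → Fin N := fun j => ⟨j + m, by omega⟩
  have eUm : Um = U.submatrix id f := by ext i j; exact hUm i j
  have eVm : Vm = V.submatrix id g := by ext i j; exact hVm i j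
  obtain ⟨Uc, eUc⟩ : ∃ Uc, Uc = U.submatrix id f' := ⟨_, rfl⟩
  obtain ⟨Vc, eVc⟩ : ∃ Vc, Vc = V.submatrix id g' := ⟨_, rfl⟩
  have sU : Um * Umᵀ + Uc * Ucᵀ = 1 := by
    rw [eUm, eUc]; exact aux_split (by omega) U hU f f' (fun _ => rfl) (fun _ => rfl)
  have sV : Vm * Vmᵀ + Vc * Vcᵀ = 1 := by
    rw [eVm, eVc]; exact aux_split (by omega) V hV g g' (fun _ => rfl) (fun _ => rfl)
  have inj1 : Function.Injective f := fun a b h => by simpa [f, Fin.ext_iff] using h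
  have inj2 : Function.Injective g := fun a b h => by simpa [g, Fin.ext_iff] using h
  have inj3 : Function.Injective f' := fun a b h => by simpa [f', Fin.ext_iff] using h
  have inj4 : Function.Injective g' := fun a b h => by simpa [g', Fin.ext_iff] using h
  have nUm : ‖Um‖ ≤ 1 := aux_norm_orth _ (by rw [eUm]; exact aux_orth U hU f inj1)
  have nVm : ‖Vm‖ ≤ 1 := aux_norm_orth _ (by rw [eVm]; exact aux_orth V hV g inj2)
  have nUc : ‖Uc‖ ≤ 1 := aux_norm_orth _ (by rw [eUc]; exact aux_orth U hU f' inj3)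
  have nVc : ‖Vc‖ ≤ 1 := aux_norm_orth _ (by rw [eVc]; exact aux_orth V hV g' inj4)
  have nUmt : ‖Umᵀ‖ ≤ 1 := by rwa [aux_norm_transpose]
  have nUct : ‖Ucᵀ‖ ≤ 1 := by rwa [aux_norm_transpose]
  have nVct : ‖Vcᵀ‖ ≤ 1 := by rwa [aux_norm_transpose]
  have nQ : ‖Qt‖ ≤ 1 := aux_norm_orth _ hQt1
  have c1 : Umᵀ * A * Vc = 0 := by
    rw [eUm, eVc, hA, aux_sub U V hU hV]
    ext i j
    have := i.isLt
    simp only [Matrix.submatrix_apply, hS, f, g', Matrix.zero_apply]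
    rw [if_neg (by omega)]
  have c2 : Ucᵀ * A * Vm = 0 := by
    rw [eUc, eVm, hA, aux_sub U V hU hV]
    ext i j
    have := j.isLt
    simp only [Matrix.submatrix_apply, hS, f', g, Matrix.zero_apply]
    rw [if_neg (by omega)]
  have c3 : Ucᵀ * A * Vc = Sm := by
    rw [eUc, eVc, hA, aux_sub U V hU hV]
    ext i j
    simp only [Matrix.submatrix_apply, hS, hSm, f', g', add_left_inj]
  have nSm : ‖Sm‖ ≤ ‖A‖ := by
    rw [← c3]; simpa using aux_norm_mul3 Ucᵀ A Vc nUct le_rfl nVc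
  have nS1 : ‖Umᵀ * A * Vm‖ ≤ ‖A‖ := by
    simpa using aux_norm_mul3 Umᵀ A Vm nUmt le_rfl nVm
  obtain ⟨Z1, hZ1, n1⟩ := aux_C Pt hPt1 Um Uc sU
  obtain ⟨Z2, hZ2, n2⟩ := aux_C Qt hQt1 Vm Vc sV
  have eA : A = Um * (Umᵀ * A * Vm) * Vmᵀ + Uc * Sm * Vcᵀ := by
    calc A = (Um * Umᵀ + Uc * Ucᵀ) * A * (Vm * Vmᵀ + Vc * Vcᵀ) := by rw [sU, sV]; simp
      _ = Um * (Umᵀ * A * Vm) * Vmᵀ + Um * (Umᵀ * A * Vc) * Vcᵀ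
          + Uc * (Ucᵀ * A * Vm) * Vmᵀ + Uc * (Ucᵀ * A * Vc) * Vcᵀ := by
          simp only [Matrix.add_mul, Matrix.mul_add, Matrix.mul_assoc]; abel
      _ = _ := by rw [c1, c2, c3]; simp
  obtain ⟨X, hX⟩ : ∃ X, X = Ptᵀ * A * Qt - Z1ᵀ * Sm * Z2 := ⟨_, rfl⟩
  have eX : X = (Ptᵀ * Um) * (Umᵀ * A * Vm) * (Qtᵀ * Vm)ᵀ
      + (Ucᵀ * Pt - Z1)ᵀ * Sm * (Vcᵀ * Qt) + Z1ᵀ * Sm * (Vcᵀ * Qt - Z2) := by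
    have : Ptᵀ * A * Qt = (Ptᵀ * Um) * (Umᵀ * A * Vm) * (Qtᵀ * Vm)ᵀ
        + (Ucᵀ * Pt)ᵀ * Sm * (Vcᵀ * Qt) := by
      conv_lhs => rw [eA]
      simp only [Matrix.transpose_mul, Matrix.transpose_transpose, Matrix.add_mul, Matrix.mul_add,
        Matrix.mul_assoc]
    rw [hX, this]
    simp only [Matrix.transpose_sub, Matrix.sub_mul, Matrix.mul_sub]
    abel
  have nX : ‖X‖ ≤ ‖A‖ * (‖Ptᵀ * Um‖ + ‖Qtᵀ * Vm‖) ^ 2 := by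
    have t1 := aux_norm_mul3 (Ptᵀ * Um) (Umᵀ * A * Vm) (Qtᵀ * Vm)ᵀ le_rfl nS1
      (le_of_eq (aux_norm_transpose _))
    have nD : ‖Vcᵀ * Qt‖ ≤ 1 := by
      refine (Matrix.l2_opNorm_mul _ _).trans ?_
      exact mul_le_one₀ nVct (norm_nonneg _) nQ
    have t2 := aux_norm_mul3 (Ucᵀ * Pt - Z1)ᵀ Sm (Vcᵀ * Qt)
      ((aux_norm_transpose _).trans_le n1) nSm nD
    have t3 := aux_norm_mul3 Z1ᵀ Sm (Vcᵀ * Qt - Z2)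
      ((aux_norm_transpose _).trans_le (aux_norm_orth _ hZ1)) nSm n2
    have t4 := (congrArg norm eX).trans_le norm_add₃_le
    have : 0 ≤ ‖A‖ * (‖Ptᵀ * Um‖ * ‖Qtᵀ * Vm‖) := by positivity
    nlinarith
  refine ⟨Matrix.fromBlocks Z1 0 0 Z2, ?_, ?_⟩
  · rw [Matrix.fromBlocks_transpose, Matrix.fromBlocks_multiply]
    simp [hZ1, hZ2]
  · rw [specNorm_eq, specNorm_eq, specNorm_eq, specNorm_eq]
    have : Bmt' - (Matrix.fromBlocks Z1 0 0 Z2)ᵀ * Bm' * Matrix.fromBlocks Z1 0 0 Z2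
        = Matrix.fromBlocks 0 X Xᵀ 0 := by
      rw [hBmt', hBm', hX, Matrix.fromBlocks_transpose, Matrix.fromBlocks_multiply,
        Matrix.fromBlocks_multiply, sub_eq_add_neg, Matrix.fromBlocks_neg, Matrix.fromBlocks_add]
      congr 1 <;>
        simp [hZ1, hZ2, Matrix.transpose_sub, Matrix.transpose_mul, Matrix.mul_assoc,
          sub_eq_add_neg]
    rw [this]
    exact (aux_block X).trans nX
end
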